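/- arXiv:1702.07104 — 2 statements merged into one kernel-verified Lean document; each statement's English description precedes it below -/
import Mathlib

section
/- For all distinct s, t ∈ S with m(s,t) < ∞, the braid relation (e_s e_t)_{m(s,t)} = (e_t e_s)_{m(s,t)} holds in Ad(Q_W), where (gh)_m denotes the alternating product ghghg⋯ with m factors. -/
open Quandles Rack CoxeterSystem

variable {B : Type} [Fintype B] {W : Type} [Group W] {M : CoxeterMatrix B}

/-- The Coxeter quandle `Q_W`: the set of reflections of `W`, with operation given by
conjugation. (Since reflections are involutions, `x ◃ y = x y x⁻¹ = x⁻¹ y x`.) -/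
def CoxeterQuandle (cs : CoxeterSystem M W) : Type := {w : W // cs.IsReflection w}

instance (cs : CoxeterSystem M W) : Quandle (CoxeterQuandle cs) where
  act x y := ⟨x.1 * y.1 * x.1⁻¹, y.2.conj x.1⟩
  self_distrib := by
    rintro ⟨x, _⟩ ⟨y, _⟩ ⟨z, _⟩
    apply Subtype.ext
    show x * (y * z * y⁻¹) * x⁻¹ = (x * y * x⁻¹) * (x * z * x⁻¹) * (x * y * x⁻¹)⁻¹
    group
  invAct x y := ⟨x.1⁻¹ * y.1 * x.1, by simpa using y.2.conj x.1⁻¹⟩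
  left_inv := by
    rintro ⟨x, _⟩ ⟨y, _⟩
    apply Subtype.ext
    show x⁻¹ * (x * y * x⁻¹) * x = y
    group
  right_inv := by
    rintro ⟨x, _⟩ ⟨y, _⟩
    apply Subtype.ext
    show x * (x⁻¹ * y * x) * x⁻¹ = y
    group
  fix := by
    rintro ⟨x, hx⟩
    apply Subtype.ext
    show x * x * x⁻¹ = x
    group

/-- The canonical generator `e_x` of the adjoint (enveloping) group `Ad(Q_W)` of the
Coxeter quandle, associated with the reflection `x`. -/
def coxE (cs : CoxeterSystem M W) (x : CoxeterQuandle cs) :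
    EnvelGroup (CoxeterQuandle cs) :=
  Rack.toEnvelGroup (CoxeterQuandle cs) x

/-- The alternating product `(gh)_m = ghgh⋯` with `m` factors. -/
def altProd {G : Type*} [One G] [Mul G] (g h : G) : ℕ → G
  | 0 => 1
  | n + 1 => g * altProd h g n

theorem altProd_succ_right {G : Type*} [Group G] (n : ℕ) : ∀ g h : G,
    altProd g h (n + 1) = altProd g h n * (if Even n then g else h) := by
  induction n with
  | zero => intro g h; simp [altProd]
  | succ n ih =>
    intro g h
    rw [altProd, ih h g, altProd, mul_assoc]
    congr 2
    by_cases hn : Even n <;> simp [hn, Nat.even_add_one]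

theorem altProd_eq_wordProd (cs : CoxeterSystem M W) (n : ℕ) : ∀ i j : B,
    altProd (cs.simple j) (cs.simple i) n = (cs.wordProd (alternatingWord i j n))⁻¹ := by
  induction n with
  | zero => intro i j; simp [altProd, alternatingWord]
  | succ n ih =>
    intro i j
    rw [altProd, ih, alternatingWord_succ, wordProd_concat, mul_inv_rev, inv_simple]

theorem coxE_act (cs : CoxeterSystem M W) (x y : CoxeterQuandle cs) :
    coxE cs (x ◃ y) * coxE cs x = coxE cs x * coxE cs y := by
  have h : coxE cs (x ◃ y) = coxE cs x * coxE cs y * (coxE cs x)⁻¹ :=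
    (Rack.toEnvelGroup (CoxeterQuandle cs)).map_act' (x := x) (y := y)
  rw [h, inv_mul_cancel_right]

theorem altProd_coxE (cs : CoxeterSystem M W) (n : ℕ) : ∀ x y z z' : CoxeterQuandle cs,
    altProd x.1 y.1 n * z.1 = z'.1 * altProd x.1 y.1 n →
    altProd (coxE cs x) (coxE cs y) n * coxE cs z =
      coxE cs z' * altProd (coxE cs x) (coxE cs y) n := by
  induction n with
  | zero =>
    intro x y z z' h
    have : z = z' := Subtype.ext (by simpa [altProd] using h)
    simp [altProd, this]
  | succ n ih =>
    intro x y z z' h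
    have hz : x ◃ (x ◃⁻¹ z') = z' := Rack.right_inv x z'
    have key := ih y x z (x ◃⁻¹ z') (by
      show _ = (x.1⁻¹ * z'.1 * x.1) * _
      rw [altProd] at h
      rw [mul_assoc, mul_assoc, ← h]
      group)
    have h2 := coxE_act cs x (x ◃⁻¹ z')
    rw [hz] at h2
    rw [altProd, mul_assoc, key, ← mul_assoc, ← h2, mul_assoc]

/-- For all distinct `s, t ∈ S` with `m(s,t) < ∞` (a `0` entry of a Coxeter matrix encodes
`m(s,t) = ∞`), the braid relation `(e_s e_t)_{m(s,t)} = (e_t e_s)_{m(s,t)}` holds in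
`Ad(Q_W)`. -/
theorem stmt_8 (cs : CoxeterSystem M W) (s t : B) (hst : s ≠ t) (hfin : M s t ≠ 0) :
    altProd (coxE cs ⟨cs.simple s, cs.isReflection_simple s⟩)
        (coxE cs ⟨cs.simple t, cs.isReflection_simple t⟩) (M s t) =
      altProd (coxE cs ⟨cs.simple t, cs.isReflection_simple t⟩)
        (coxE cs ⟨cs.simple s, cs.isReflection_simple s⟩) (M s t) := by
  have hW : altProd (cs.simple s) (cs.simple t) (M s t) =
      altProd (cs.simple t) (cs.simple s) (M s t) := by
    rw [altProd_eq_wordProd, altProd_eq_wordProd]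
    have := cs.wordProd_braidWord_eq s t
    rw [braidWord, braidWord, M.symmetric t s] at this
    rw [this]
  obtain ⟨n, hn⟩ := Nat.exists_eq_succ_of_ne_zero hfin
  rw [hn] at hW ⊢
  rw [Nat.succ_eq_add_one, altProd_succ_right, altProd] at hW ⊢
  have key := altProd_coxE cs n ⟨cs.simple s, cs.isReflection_simple s⟩
    ⟨cs.simple t, cs.isReflection_simple t⟩
    (if Even n then ⟨cs.simple s, cs.isReflection_simple s⟩
      else ⟨cs.simple t, cs.isReflection_simple t⟩)
    ⟨cs.simple t, cs.isReflection_simple t⟩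
  by_cases he : Even n
  · simp only [he, if_true] at key hW ⊢
    exact key hW
  · simp only [he, if_false] at key hW ⊢
    exact key hW
end

section
/- For every n ≥ 0, the restriction map in group cohomology H^n(Ad(Q_W), ℚ) → H^n(C_W, ℚ) (trivial coefficients) induced by the inclusion C_W ↪ Ad(Q_W) is an isomorphism; consequently H^*(Ad(Q_W), ℚ) is isomorphic to an exterior ℚ-algebra on c(W) generators of degree 1. -/
open Quandles Rack CoxeterSystem

variable {B : Type} [Fintype B] {W : Type} [Group W] {M : CoxeterMatrix B}

open groupCohomology

/-- Restriction of inhomogeneous cochains (with trivial `ℚ`-coefficients) along a group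
homomorphism `f : H →* G`, given in degree `n` by precomposition with `f`. -/
noncomputable def cochainsRes {G H : Type} [Group G] [Group H] (f : H →* G) :
    inhomogeneousCochains (Rep.trivial ℚ G ℚ) ⟶ inhomogeneousCochains (Rep.trivial ℚ H ℚ) where
  f n :=
    (ModuleCat.ofHom
     ({ toFun := fun φ g => φ (fun i => f (g i))
        map_add' := fun _ _ => rfl
        map_smul' := fun _ _ => rfl } :
      ((Fin n → G) → ℚ) →ₗ[ℚ] ((Fin n → H) → ℚ)) :
      (inhomogeneousCochains (Rep.trivial ℚ G ℚ)).X n ⟶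
        (inhomogeneousCochains (Rep.trivial ℚ H ℚ)).X n)
  comm' := by
    rintro i j (rfl : i + 1 = j)
    rw [inhomogeneousCochains.d_def, inhomogeneousCochains.d_def]
    refine ModuleCat.hom_ext <| LinearMap.ext fun φ => funext fun g => ?_
    show (inhomogeneousCochains.d (Rep.trivial ℚ H ℚ) i).hom (fun g' => φ fun k => f (g' k)) g =
      (inhomogeneousCochains.d (Rep.trivial ℚ G ℚ) i).hom φ (fun k => f (g k))
    simp only [inhomogeneousCochains.d_hom_apply]
    have hc : ∀ j : Fin (i + 1), (fun k => f (Fin.contractNth j (· * ·) g k)) =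
        Fin.contractNth j (· * ·) (fun k => f (g k)) := by
      intro j
      funext k
      unfold Fin.contractNth
      split_ifs <;> simp [map_mul]
    congr 1
    refine Finset.sum_congr rfl fun j _ => ?_
    rw [hc]

/-! ### The (homogeneous) list complex -/

section ListComplex

/-- differential -/
def lD {X : Type} : (List X → ℚ) → List X → ℚ
  | _, [] => 0
  | f, x :: l => f l - lD (fun l' => f (x :: l')) l

/-- prism homotopy -/
def lH {X : Type} (r : X → X) : (List X → ℚ) → List X → ℚ
  | _, [] => 0
  | f, x :: l => f (x :: r x :: l.map r) - lH r (fun l' => f (x :: l')) l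

variable {X Y : Type}

theorem lD_nil (f : List X → ℚ) : lD f [] = 0 := rfl
theorem lD_cons (f : List X → ℚ) (x : X) (l : List X) :
    lD f (x :: l) = f l - lD (fun l' => f (x :: l')) l := rfl
theorem lH_nil (r : X → X) (f : List X → ℚ) : lH r f [] = 0 := rfl
theorem lH_cons (r : X → X) (f : List X → ℚ) (x : X) (l : List X) :
    lH r f (x :: l) = f (x :: r x :: l.map r) - lH r (fun l' => f (x :: l')) l := rfl

theorem lD_add (f g : List X → ℚ) : lD (f + g) = lD f + lD g := by
  funext l
  induction l generalizing f g with
  | nil => simp [lD]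
  | cons x l ih =>
    have := ih (fun l' => f (x :: l')) (fun l' => g (x :: l'))
    simp only [lD_cons, Pi.add_apply] at this ⊢
    rw [show (fun l' => f (x :: l') + g (x :: l')) =
      (fun l' => f (x :: l')) + (fun l' => g (x :: l')) from rfl, this]
    ring

theorem lD_smul (c : ℚ) (f : List X → ℚ) : lD (c • f) = c • lD f := by
  funext l
  induction l generalizing f with
  | nil => simp [lD]
  | cons x l ih =>
    have := ih (fun l' => f (x :: l'))
    simp only [lD_cons, Pi.smul_apply] at this ⊢
    rw [show (fun l' => c • f (x :: l')) = c • (fun l' => f (x :: l')) from rfl, this]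
    simp only [smul_eq_mul]
    ring

/-- linear version -/
def dL (X : Type) : (List X → ℚ) →ₗ[ℚ] (List X → ℚ) where
  toFun := lD
  map_add' := lD_add
  map_smul' := lD_smul

theorem dL_apply (f : List X → ℚ) : dL X f = lD f := rfl

theorem dL_nil (f : List X → ℚ) : dL X f [] = 0 := rfl
theorem dL_cons (f : List X → ℚ) (x : X) (l : List X) :
    dL X f (x :: l) = f l - dL X (fun l' => f (x :: l')) l := rfl

theorem dL_dL (f : List X → ℚ) : dL X (dL X f) = 0 := by
  funext l
  induction l generalizing f with
  | nil => rfl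
  | cons x l ih =>
    rw [dL_cons, show (fun l' => dL X f (x :: l')) = f - dL X (fun l' => f (x :: l')) from rfl,
      map_sub, Pi.sub_apply, ih]
    simp

theorem dL_map (r : X → Y) (f : List Y → ℚ) (l : List X) :
    dL X (fun l => f (l.map r)) l = dL Y f (l.map r) := by
  induction l generalizing f with
  | nil => rfl
  | cons x l ih =>
    rw [dL_cons, List.map_cons, dL_cons, ← ih]
    rfl

theorem lH_map (r k : X → X) (hrk : ∀ x, r (k x) = k (r x)) (f : List X → ℚ) (l : List X) :
    lH r (fun l => f (l.map k)) l = lH r f (l.map k) := by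
  induction l generalizing f with
  | nil => rfl
  | cons x l ih =>
    rw [lH_cons, List.map_cons (l := l), lH_cons, ← ih]
    have : List.map k (List.map r l) = List.map r (List.map k l) := by
      simp [hrk]
    simp [hrk, this]

theorem lH_add (r : X → X) (f g : List X → ℚ) : lH r (f + g) = lH r f + lH r g := by
  funext l
  induction l generalizing f g with
  | nil => simp [lH]
  | cons x l ih =>
    have := ih (fun l' => f (x :: l')) (fun l' => g (x :: l'))
    simp only [lH_cons, Pi.add_apply] at this ⊢
    rw [show (fun l' => f (x :: l') + g (x :: l')) =
      (fun l' => f (x :: l')) + (fun l' => g (x :: l')) from rfl, this]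
    ring

theorem lH_smul (r : X → X) (c : ℚ) (f : List X → ℚ) : lH r (c • f) = c • lH r f := by
  funext l
  induction l generalizing f with
  | nil => simp [lH]
  | cons x l ih =>
    have := ih (fun l' => f (x :: l'))
    simp only [lH_cons, Pi.smul_apply] at this ⊢
    rw [show (fun l' => c • f (x :: l')) = c • (fun l' => f (x :: l')) from rfl, this]
    simp only [smul_eq_mul]
    ring

theorem lH_sub (r : X → X) (f g : List X → ℚ) : lH r (f - g) = lH r f - lH r g := by
  rw [sub_eq_add_neg, lH_add, show -g = (-1 : ℚ) • g by simp, lH_smul]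
  simp [sub_eq_add_neg]

theorem homotopy (r : X → X) (f : List X → ℚ) (l : List X) :
    dL X (lH r f) l + lH r (dL X f) l = f (l.map r) - f l := by
  induction l generalizing f with
  | nil => simp [lH_nil, dL_nil]
  | cons x l ih =>
    have h1 : (fun l' => lH r f (x :: l')) =
      (fun l' => f (x :: r x :: l'.map r)) - lH r (fun l' => f (x :: l')) := rfl
    have h2 : (fun l' => dL X f (x :: l')) = f - dL X (fun l' => f (x :: l')) := rfl
    have ih' := ih (fun l' => f (x :: l'))
    rw [dL_cons, lH_cons, h1, h2, map_sub, lH_sub, Pi.sub_apply, Pi.sub_apply,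
      dL_map r (fun l' => f (x :: r x :: l')) l, dL_cons, dL_cons, List.map_cons]
    linarith

theorem homotopy_of_closed (r : X → X) (f : List X → ℚ) (hf : dL X f = 0) :
    (fun l => f (l.map r)) - f = dL X (lH r f) := by
  funext l
  have := homotopy r f l
  rw [hf] at this
  have h0 : lH r (0 : List X → ℚ) = 0 := by simpa using lH_smul r 0 0
  rw [h0] at this
  simp only [Pi.zero_apply, add_zero] at this
  rw [this]; rfl

/-- truncation to lists of length m -/
def trunc (m : ℕ) (f : List X → ℚ) : List X → ℚ := fun l => if l.length = m then f l else 0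

theorem dL_supp (m : ℕ) (f : List X → ℚ) (l : List X) (hl : l.length = m + 1) :
    dL X (trunc m f) l = dL X f l := by
  induction l generalizing f m with
  | nil => rfl
  | cons x l ih =>
    simp only [List.length_cons, add_left_inj] at hl
    rw [dL_cons, dL_cons]
    congr 1
    · simp [trunc, hl]
    · cases m with
      | zero =>
        have : l = [] := by simpa using hl
        subst this; rfl
      | succ m =>
        rw [← ih m (fun l' => f (x :: l')) hl]
        have : (fun l' => trunc (m + 1) f (x :: l')) = trunc m fun l' => f (x :: l') := by
          funext l'
          simp [trunc]
        rw [this]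

theorem dL_supp' (m : ℕ) (f : List X → ℚ) (hf : ∀ l, l.length = m → f l = 0) (l : List X)
    (hl : l.length = m + 1) :
    dL X f l = 0 := by
  rw [← dL_supp m f l hl]
  have : trunc m f = 0 := by
    funext l; by_cases h : l.length = m <;> simp [trunc, h, hf]
  rw [this]; simp

theorem dL_trunc (m : ℕ) (f : List X → ℚ) : dL X (trunc m f) = trunc (m + 1) (dL X f) := by
  funext l
  by_cases h : l.length = m + 1
  · rw [dL_supp m f l h]; simp [trunc, h]
  · simp only [trunc, h, if_false]
    cases l with
    | nil => rfl
    | cons x l =>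
      apply dL_supp' l.length _ _ _ rfl
      intro l' hl'
      simp only [List.length_cons] at h
      simp [trunc]; omega

end ListComplex
/-! ### Good submodules and Mayer-Vietoris -/

section GoodSub

variable {E : Type} [AddCommGroup E] [Module ℚ E]

/-- The quotient complex `E / P` is acyclic. -/
def GoodSub (d : E →ₗ[ℚ] E) (P : Submodule ℚ E) : Prop :=
  ∀ x, d x ∈ P → ∃ y, x - d y ∈ P

theorem GoodSub.inf {d : E →ₗ[ℚ] E} (hd : ∀ x, d (d x) = 0) {P Q : Submodule ℚ E}
    (hP : ∀ x ∈ P, d x ∈ P) (hQ : ∀ x ∈ Q, d x ∈ Q)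
    (gP : GoodSub d P) (gQ : GoodSub d Q) (gPQ : GoodSub d (P ⊔ Q)) : GoodSub d (P ⊓ Q) := by
  intro x hx
  obtain ⟨y, hy⟩ := gP x hx.1
  obtain ⟨z, hz⟩ := gQ x hx.2
  have h1 : d (y - z) ∈ P ⊔ Q := by
    have : d (y - z) = -(x - d y) + (x - d z) := by rw [map_sub]; abel
    rw [this]
    exact Submodule.add_mem_sup (P.neg_mem hy) hz
  obtain ⟨u, hu⟩ := gPQ _ h1
  obtain ⟨p, hp, q, hq, hpq⟩ := Submodule.mem_sup.1 hu
  refine ⟨y - p, ?_, ?_⟩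
  · have : x - d (y - p) = (x - d y) + d p := by rw [map_sub]; abel
    rw [this]; exact P.add_mem hy (hP p hp)
  · have e : y - p = z + q + d u := by
      have : y - p = (y - z - d u) - p + z + d u := by abel
      rw [this, ← hpq]; abel
    have : x - d (y - p) = (x - d z) - d q := by
      rw [e, map_add, map_add, hd]; abel
    rw [this]; exact Q.sub_mem hz (hQ q hq)

theorem GoodSub.sup {d : E →ₗ[ℚ] E} (hd : ∀ x, d (d x) = 0) {P Q : Submodule ℚ E}
    (hP : ∀ x ∈ P, d x ∈ P) (hQ : ∀ x ∈ Q, d x ∈ Q)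
    (gP : GoodSub d P) (gQ : GoodSub d Q) (gPQ : GoodSub d (P ⊓ Q)) : GoodSub d (P ⊔ Q) := by
  intro x hx
  obtain ⟨p, hp, q, hq, hpq⟩ := Submodule.mem_sup.1 hx
  have h1 : d p = - d q := by
    have := hd x
    rw [← hpq, map_add] at this
    exact eq_neg_of_add_eq_zero_left this
  obtain ⟨u, hu⟩ := gPQ p ⟨hP p hp, by rw [h1]; exact Q.neg_mem (hQ q hq)⟩
  have h2 : d u ∈ P := by
    have : d u = p - (p - d u) := by abel
    rw [this]; exact P.sub_mem hp hu.1
  obtain ⟨v, hv⟩ := gP u h2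
  have h3 : d (x - u) ∈ Q := by
    have : d (x - u) = (p - d u) + q := by rw [map_sub, ← hpq]; abel
    rw [this]; exact Q.add_mem hu.2 hq
  obtain ⟨y, hy⟩ := gQ _ h3
  refine ⟨v + y, ?_⟩
  have : x - d (v + y) = (u - d v) + (x - u - d y) := by rw [map_add]; abel
  rw [this]
  exact Submodule.add_mem_sup hv hy

variable {I : Type} [DecidableEq I]

/-- common fixed points -/
def fixSub (p : I → E →ₗ[ℚ] E) (U : Finset I) : Submodule ℚ E where
  carrier := {f | ∀ s ∈ U, p s f = f}
  add_mem' := by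
    intro a b ha hb s hs
    rw [map_add, ha s hs, hb s hs]
  zero_mem' := by intro s _; simp
  smul_mem' := by
    intro c a ha s hs
    rw [map_smul, ha s hs]

theorem mem_fixSub {p : I → E →ₗ[ℚ] E} {U : Finset I} {f : E} :
    f ∈ fixSub p U ↔ ∀ s ∈ U, p s f = f := Iff.rfl

/-- sum of fixed point spaces -/
def sumSub (p : I → E →ₗ[ℚ] E) (U R : Finset I) : Submodule ℚ E :=
  ⨆ r ∈ R, fixSub p (insert r U)

theorem sumSub_empty (p : I → E →ₗ[ℚ] E) (U : Finset I) : sumSub p U ∅ = ⊥ := by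
  simp [sumSub]

theorem sumSub_insert (p : I → E →ₗ[ℚ] E) (U R : Finset I) (r : I) :
    sumSub p U (insert r R) = fixSub p (insert r U) ⊔ sumSub p U R := by
  simp only [sumSub]
  rw [Finset.iSup_insert]

theorem sumSub_inf (p : I → E →ₗ[ℚ] E) (hid : ∀ s f, p s (p s f) = p s f)
    (hcomm : ∀ s t f, p s (p t f) = p t (p s f)) (U R : Finset I) (r : I) :
    fixSub p (insert r U) ⊓ sumSub p U R = sumSub p (insert r U) R := by
  apply le_antisymm
  · rintro f ⟨hf1, hf2⟩
    have h : p r f = f := hf1 r (Finset.mem_insert_self _ _)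
    rw [← h]
    have h2 : p r f ∈ (sumSub p U R).map (p r) := ⟨f, hf2, rfl⟩
    refine SetLike.le_def.1 ?_ h2
    simp only [sumSub, Submodule.map_iSup]
    refine iSup₂_mono fun t _ => ?_
    rintro _ ⟨g, hg, rfl⟩ s hs
    rw [Finset.mem_insert, Finset.mem_insert] at hs
    have hg' : ∀ s ∈ insert t U, p s g = g := hg
    rcases hs with rfl | rfl | hs
    · rw [hcomm, hg' _ (Finset.mem_insert_self _ _)]
    · exact hid _ _
    · rw [hcomm, hg' _ (Finset.mem_insert_of_mem hs)]
  · refine iSup₂_le fun t ht => ?_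
    refine le_inf ?_ ?_
    · intro f hf s hs
      exact hf s (Finset.mem_insert_of_mem hs)
    · refine le_trans ?_ (le_iSup₂ (f := fun r _ => fixSub p (insert r U)) t ht)
      intro f hf s hs
      apply hf s
      rw [Finset.mem_insert] at hs ⊢
      rcases hs with h | h
      · exact Or.inl h
      · exact Or.inr (Finset.mem_insert_of_mem h)

theorem fixSub_stable (p : I → E →ₗ[ℚ] E) (d : E →ₗ[ℚ] E)
    (hpd : ∀ s f, p s f = f → p s (d f) = d f) (U : Finset I) :
    ∀ x ∈ fixSub p U, d x ∈ fixSub p U := fun x hx s hs => hpd s x (hx s hs)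

theorem sumSub_stable (p : I → E →ₗ[ℚ] E) (d : E →ₗ[ℚ] E)
    (hpd : ∀ s f, p s f = f → p s (d f) = d f) (U R : Finset I) :
    ∀ x ∈ sumSub p U R, d x ∈ sumSub p U R := by
  intro x hx
  have h2 : d x ∈ (sumSub p U R).map d := ⟨x, hx, rfl⟩
  refine SetLike.le_def.1 ?_ h2
  simp only [sumSub, Submodule.map_iSup]
  refine iSup₂_mono fun t _ => ?_
  rintro _ ⟨g, hg, rfl⟩
  exact fixSub_stable p d hpd _ g hg

theorem good_sumSub_of_ssubset (p : I → E →ₗ[ℚ] E) (d : E →ₗ[ℚ] E) (hd : ∀ x, d (d x) = 0)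
    (hid : ∀ s f, p s (p s f) = p s f)
    (hcomm : ∀ s t f, p s (p t f) = p t (p s f))
    (hpd : ∀ s f, p s f = f → p s (d f) = d f) (T : Finset I)
    (hT : ∀ V, V ⊂ T → GoodSub d (fixSub p V)) (R : Finset I) :
    ∀ U : Finset I, R.Nonempty → U ∪ R ⊂ T → GoodSub d (sumSub p U R) := by
  induction R using Finset.induction_on with
  | empty => intro U h; exact absurd h (by simp)
  | insert r R hr ih =>
    intro U _ hU
    rw [sumSub_insert]
    have hg1 : GoodSub d (fixSub p (insert r U)) := by
      apply hT
      refine lt_of_le_of_lt ?_ hU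
      intro s hs
      simp only [Finset.mem_insert, Finset.mem_union] at hs ⊢
      tauto
    rcases R.eq_empty_or_nonempty with rfl | hR
    · rw [sumSub_empty, sup_bot_eq]
      exact hg1
    · apply GoodSub.sup hd (fixSub_stable p d hpd _) (sumSub_stable p d hpd _ _) hg1
      · apply ih U hR
        refine lt_of_le_of_lt ?_ hU
        intro s hs
        simp only [Finset.mem_insert, Finset.mem_union] at hs ⊢
        tauto
      · rw [sumSub_inf p hid hcomm]
        apply ih _ hR
        refine lt_of_le_of_lt ?_ hU
        intro s hs
        simp only [Finset.mem_insert, Finset.mem_union] at hs ⊢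
        tauto

theorem good_fixSub (p : I → E →ₗ[ℚ] E) (d : E →ₗ[ℚ] E) (hd : ∀ x, d (d x) = 0)
    (hid : ∀ s f, p s (p s f) = p s f)
    (hcomm : ∀ s t f, p s (p t f) = p t (p s f))
    (hpd : ∀ s f, p s f = f → p s (d f) = d f)
    (hT : ∀ T, GoodSub d (fixSub p T) ∨ sumSub p ∅ T = ⊤) (T : Finset I) :
    GoodSub d (fixSub p T) := by
  induction T using Finset.strongInduction with
  | H T ih =>
    rcases hT T with h | h
    · exact h
    rcases T.eq_empty_or_nonempty with rfl | ⟨s, hs⟩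
    · intro x _
      exact ⟨0, fun s hs => by simp at hs⟩
    have key : ∀ U R : Finset I, R.Nonempty → Disjoint U R → U ∪ R = T →
        GoodSub d (sumSub p U R) := by
      intro U
      induction U using Finset.induction_on with
      | empty =>
        intro R _ _ hR
        rw [Finset.empty_union] at hR
        rw [hR, h]
        intro x _
        exact ⟨0, trivial⟩
      | insert r U hr ihU =>
        intro R hR hdis hUR
        rw [Finset.disjoint_insert_left] at hdis
        rw [← sumSub_inf p hid hcomm]
        obtain ⟨t, ht⟩ := hR
        apply GoodSub.inf hd (fixSub_stable p d hpd _) (sumSub_stable p d hpd _ _)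
        · apply ih
          rw [Finset.ssubset_iff_of_subset (by rw [← hUR]; exact Finset.subset_union_left)]
          refine ⟨t, by rw [← hUR]; exact Finset.mem_union_right _ ht, ?_⟩
          intro h'
          rw [Finset.mem_insert] at h'
          rcases h' with rfl | h'
          · exact hdis.1 ht
          · exact Finset.disjoint_left.1 hdis.2 h' ht
        · apply good_sumSub_of_ssubset p d hd hid hcomm hpd T ih R U ⟨t, ht⟩
          rw [Finset.ssubset_iff_of_subset (by
            rw [← hUR]; exact Finset.union_subset_union_left (Finset.subset_insert _ _))]
          refine ⟨r, by rw [← hUR]; simp, ?_⟩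
          rw [Finset.mem_union]
          rintro (h' | h')
          · exact hr h'
          · exact hdis.1 h'
        · rw [← sumSub_insert]
          apply ihU
          · simp
          · rw [Finset.disjoint_insert_right]
            exact ⟨hr, hdis.2⟩
          · rw [← hUR]
            ext x
            simp only [Finset.mem_insert, Finset.mem_union]
            tauto
    have := key (T.erase s) {s} (by simp) (by simp) (by
      ext x
      simp only [Finset.mem_union, Finset.mem_erase, Finset.mem_singleton]
      constructor
      · rintro (h | rfl)
        · exact h.2
        · exact hs
      · intro hx
        by_cases h : x = s
        · exact Or.inr h
        · exact Or.inl ⟨h, hx⟩)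
    rw [sumSub] at this
    simpa [Finset.insert_erase hs] using this

end GoodSub
/-! ### The exchange condition -/

section Exchange

open Classical in
/-- the reflection cocycle generators -/
noncomputable def etaGen (cs : CoxeterSystem M W) (i : B) : Function.End (W × ZMod 2) :=
  fun p => (cs.simple i * p.1 * cs.simple i, p.2 + if p.1 = cs.simple i then 1 else 0)

theorem conj_pow_aux {H : Type} [Group H] (a b : H) (ha : a * a = 1) (hb : b * b = 1) (k : ℕ) :
    ((a * b) ^ k)⁻¹ * b = b * (a * b) ^ k := by
  have ha' : a⁻¹ = a := inv_eq_of_mul_eq_one_left ha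
  have hb' : b⁻¹ = b := inv_eq_of_mul_eq_one_left hb
  have h1 : b * (a * b) * b⁻¹ = (a * b)⁻¹ := by
    rw [mul_inv_rev, ha', hb', mul_assoc, mul_assoc, hb, mul_one]
  have h2 : b * (a * b) ^ k * b⁻¹ = ((a * b) ^ k)⁻¹ := by
    rw [← conj_pow, h1, inv_pow]
  rw [← h2]
  group

open Classical in
theorem etaGen_pow (cs : CoxeterSystem M W) (i j : B) (k : ℕ) (t : W) (ε : ZMod 2) :
    ((etaGen cs i * etaGen cs j) ^ k) (t, ε) =
      ((cs.simple i * cs.simple j) ^ k * t * ((cs.simple i * cs.simple j) ^ k)⁻¹,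
        ε + ∑ a ∈ Finset.range (2 * k),
          if t = cs.simple j * (cs.simple i * cs.simple j) ^ a then (1 : ZMod 2) else 0) := by
  induction k with
  | zero => simp; rfl
  | succ k ih =>
    rw [pow_succ']
    change etaGen cs i (etaGen cs j (((etaGen cs i * etaGen cs j) ^ k) (t, ε))) = _
    rw [ih]
    have hi := cs.simple_mul_simple_self i
    have hj := cs.simple_mul_simple_self j
    set a := cs.simple i with ha_def
    set b := cs.simple j with hb_def
    have ha' : a⁻¹ = a := inv_eq_of_mul_eq_one_left hi
    have hb' : b⁻¹ = b := inv_eq_of_mul_eq_one_left hj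
    have hc := conj_pow_aux a b hi hj k
    have h1 : ((a * b) ^ k * t * ((a * b) ^ k)⁻¹ = b) ↔ t = b * (a * b) ^ (2 * k) := by
      rw [two_mul, pow_add, ← mul_assoc, ← hc]
      constructor
      · intro h
        calc t = ((a * b) ^ k)⁻¹ * ((a * b) ^ k * t * ((a * b) ^ k)⁻¹) * (a * b) ^ k := by group
          _ = _ := by rw [h]
      · intro h; rw [h]; group
    have h2 : (b * ((a * b) ^ k * t * ((a * b) ^ k)⁻¹) * b = a) ↔
        t = b * (a * b) ^ (2 * k + 1) := by
      have e : b * (a * b) ^ (2 * k + 1) = ((a * b) ^ k)⁻¹ * (b * a * b) * (a * b) ^ k := by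
        rw [show 2 * k + 1 = k + 1 + k by ring, pow_add, pow_succ, ← mul_assoc, ← mul_assoc, ← hc]
        group
      rw [e]
      constructor
      · intro h
        have : b * a * b = (a * b) ^ k * t * ((a * b) ^ k)⁻¹ := by
          calc _ = b * (b * ((a * b) ^ k * t * ((a * b) ^ k)⁻¹) * b) * b := by rw [h]
            _ = (b * b) * ((a * b) ^ k * t * ((a * b) ^ k)⁻¹) * (b * b) := by group
            _ = _ := by rw [hj]; group
        rw [this]; group
      · intro h
        rw [h]
        calc _ = (b * b) * a * (b * b) := by group
            _ = _ := by rw [hj]; group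
    rw [show 2 * (k + 1) = 2 * k + 1 + 1 by ring, Finset.sum_range_succ, Finset.sum_range_succ]
    simp only [etaGen, ← ha_def, ← hb_def, h1, h2]
    refine Prod.ext ?_ ?_
    · simp only [pow_succ', mul_inv_rev, ha', hb']
      group
    · simp only
      abel

theorem etaGen_liftable (cs : CoxeterSystem M W) : M.IsLiftable (etaGen cs) := by
  classical
  intro i j
  funext ⟨t, ε⟩
  rw [etaGen_pow, cs.simple_mul_simple_pow, two_mul, Finset.sum_range_add]
  simp only [pow_add, cs.simple_mul_simple_pow, one_mul]
  rw [← two_mul, show (2 : ZMod 2) = 0 from rfl]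
  simp
  rfl

/-- the reflection cocycle -/
noncomputable def etaHom (cs : CoxeterSystem M W) : W →* Function.End (W × ZMod 2) :=
  cs.lift ⟨etaGen cs, etaGen_liftable cs⟩

theorem etaHom_simple (cs : CoxeterSystem M W) (i : B) :
    etaHom cs (cs.simple i) = etaGen cs i := by
  exact cs.lift_apply_simple _ i

open Classical in
theorem etaHom_wordProd (cs : CoxeterSystem M W) (ω : List B) (t : W) (ε : ZMod 2) :
    etaHom cs (cs.wordProd ω) (t, ε) =
      (cs.wordProd ω * t * (cs.wordProd ω)⁻¹, ε + ((cs.rightInvSeq ω).count t : ZMod 2)) := by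
  induction ω with
  | nil =>
    simp
    rfl
  | cons i ω ih =>
    rw [cs.wordProd_cons, map_mul]
    change etaHom cs (cs.simple i) (etaHom cs (cs.wordProd ω) (t, ε)) = _
    rw [ih, etaHom_simple, etaGen, CoxeterSystem.rightInvSeq, List.count_cons]
    refine Prod.ext ?_ ?_
    · simp only [mul_inv_rev, cs.inv_simple]
      group
    · have : (cs.wordProd ω * t * (cs.wordProd ω)⁻¹ = cs.simple i) ↔
          ((cs.wordProd ω)⁻¹ * cs.simple i * cs.wordProd ω = t) := by
        constructor
        · intro h; rw [← h]; group
        · intro h; rw [← h]; group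
      simp only [this, beq_iff_eq]
      push_cast
      rw [add_assoc]

theorem exchange (cs : CoxeterSystem M W) (ω : List B) (i : B)
    (h : cs.IsRightDescent (cs.wordProd ω) i) :
    ∃ j < ω.length, cs.wordProd ω * cs.simple i = cs.wordProd (ω.eraseIdx j) := by
  classical
  set w := cs.wordProd ω with hw
  obtain ⟨ω', hω', hw'⟩ := cs.exists_isReduced (w * cs.simple i)
  have h1 : cs.simple i ∉ cs.rightInvSeq ω' := by
    intro hm
    have := (cs.isRightInversion_of_mem_rightInvSeq hω' hm).2
    rw [← hw', mul_assoc, cs.simple_mul_simple_self, mul_one] at this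
    unfold CoxeterSystem.IsRightDescent at h
    omega
  have h2 : (etaHom cs w (cs.simple i, 0)).2 = 1 := by
    have : w = cs.wordProd ω' * cs.simple i := by
      rw [← hw', mul_assoc, cs.simple_mul_simple_self, mul_one]
    rw [this, map_mul]
    change (etaHom cs (cs.wordProd ω') (etaHom cs (cs.simple i) (cs.simple i, 0))).2 = 1
    rw [etaHom_simple, etaGen, etaHom_wordProd]
    simp only [cs.simple_mul_simple_self, one_mul]
    rw [List.count_eq_zero_of_not_mem h1]
    simp
  rw [hw, etaHom_wordProd] at h2
  have h3 : cs.simple i ∈ cs.rightInvSeq ω := by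
    by_contra hn
    simp [List.count_eq_zero_of_not_mem hn] at h2
  obtain ⟨j, hj, hji⟩ := List.getElem_of_mem h3
  refine ⟨j, by simpa using hj, ?_⟩
  rw [← cs.wordProd_mul_getD_rightInvSeq, ← hji, ← List.getD_eq_getElem _ 1 hj]

end Exchange
/-! ### Coxeter combinatorics: descents and parabolic subgroups -/

section Parabolic

/-- parabolic subgroup -/
def parab (cs : CoxeterSystem M W) (T : Set B) : Subgroup W := Subgroup.closure (cs.simple '' T)

theorem simple_mem_parab (cs : CoxeterSystem M W) {T : Set B} {s : B} (hs : s ∈ T) :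
    cs.simple s ∈ parab cs T := Subgroup.subset_closure ⟨s, hs, rfl⟩

theorem wordProd_mem_parab (cs : CoxeterSystem M W) {T : Set B} (ω : List B)
    (h : ∀ i ∈ ω, i ∈ T) : cs.wordProd ω ∈ parab cs T := by
  induction ω with
  | nil => simpa using (parab cs T).one_mem
  | cons i ω ih =>
    rw [cs.wordProd_cons]
    exact (parab cs T).mul_mem (simple_mem_parab cs (h i (by simp)))
      (ih fun j hj => h j (by simp [hj]))

theorem exists_reduced_parab (cs : CoxeterSystem M W) {T : Set B} {v : W} (hv : v ∈ parab cs T) :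
    ∃ ω, cs.IsReduced ω ∧ (∀ i ∈ ω, i ∈ T) ∧ cs.wordProd ω = v := by
  have key : ∀ (x : W) (s : B), s ∈ T →
      (∃ ω, cs.IsReduced ω ∧ (∀ i ∈ ω, i ∈ T) ∧ cs.wordProd ω = x) →
      (∃ ω, cs.IsReduced ω ∧ (∀ i ∈ ω, i ∈ T) ∧ cs.wordProd ω = x * cs.simple s) := by
    rintro x s hs ⟨ω, hω, hT, rfl⟩
    by_cases hd : cs.IsRightDescent (cs.wordProd ω) s
    · obtain ⟨j, hj, he⟩ := exchange cs ω s hd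
      refine ⟨ω.eraseIdx j, ?_, fun i hi => hT i (List.mem_of_mem_eraseIdx hi), he.symm⟩
      rw [cs.isRightDescent_iff, he, hω.eq] at hd
      unfold CoxeterSystem.IsReduced
      rw [List.length_eraseIdx_of_lt hj]
      omega
    · refine ⟨ω ++ [s], ?_, ?_, by simp [cs.wordProd_append]⟩
      · rw [cs.not_isRightDescent_iff, hω.eq] at hd
        unfold CoxeterSystem.IsReduced
        simp [cs.wordProd_append, hd]
      · intro i hi
        rw [List.mem_append, List.mem_singleton] at hi
        rcases hi with hi | rfl
        · exact hT i hi
        · exact hs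
  refine Subgroup.closure_induction_right (p := fun v _ =>
    ∃ ω, cs.IsReduced ω ∧ (∀ i ∈ ω, i ∈ T) ∧ cs.wordProd ω = v) ?_ ?_ ?_ hv
  · exact ⟨[], by simp [CoxeterSystem.IsReduced], by simp, by simp⟩
  · rintro x _ _ ⟨s, hs, rfl⟩ h
    exact key x s hs h
  · rintro x _ _ ⟨s, hs, rfl⟩ h
    rw [cs.inv_simple]
    exact key x s hs h

theorem eraseIdx_contra (cs : CoxeterSystem M W) {ω : List B} {s : B}
    (hω : cs.IsReduced (ω ++ [s])) {j : ℕ} (hj : j < ω.length) :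
    cs.wordProd ω * cs.simple s ≠ cs.wordProd (ω.eraseIdx j) := by
  intro h
  have h1 := hω.eq
  rw [cs.wordProd_append, cs.wordProd_singleton, h] at h1
  have h2 := cs.length_wordProd_le (ω.eraseIdx j)
  rw [List.length_eraseIdx_of_lt hj] at h2
  simp at h1
  omega

theorem isReduced_of_append (cs : CoxeterSystem M W) {ω ω' : List B}
    (hω : cs.IsReduced (ω ++ ω')) : cs.IsReduced ω := by
  have := hω.take ω.length
  simpa using this

theorem finite_parab_of_descents (cs : CoxeterSystem M W) {T : Set B} (w : W)
    (hw : ∀ s ∈ T, cs.IsRightDescent w s) : Finite (parab cs T) := by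
  have key : ∀ ω : List B, cs.IsReduced ω → (∀ i ∈ ω, i ∈ T) →
      ∃ y : List B, w = cs.wordProd (y ++ ω) ∧ (y ++ ω).length = cs.length w := by
    intro ω
    induction ω using List.reverseRecOn with
    | nil =>
      intro _ _
      obtain ⟨y, hy, rfl⟩ := cs.exists_isReduced w
      exact ⟨y, by simp, by simp [hy.eq]⟩
    | append_singleton ω s ih =>
      intro hω hT
      obtain ⟨y, hy, hl⟩ := ih (isReduced_of_append cs hω) (fun i hi => hT i (by simp [hi]))
      have hd := hw s (hT s (by simp))
      rw [hy] at hd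
      obtain ⟨j, hj, he⟩ := exchange cs _ s hd
      by_cases hjy : j < y.length
      · rw [List.eraseIdx_append_of_lt_length hjy] at he
        refine ⟨y.eraseIdx j, ?_, ?_⟩
        · rw [← List.append_assoc, cs.wordProd_append, ← he, cs.wordProd_singleton, mul_assoc,
            cs.simple_mul_simple_self, mul_one, hy]
        · rw [← hl]
          simp only [List.length_append, List.length_eraseIdx_of_lt hjy, List.length_cons,
            List.length_nil]
          omega
      · rw [List.eraseIdx_append_of_length_le (by omega), cs.wordProd_append, cs.wordProd_append,
          mul_assoc] at he
        have := mul_left_cancel he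
        exact absurd this (eraseIdx_contra cs hω (by simp at hj; omega))
  have hfin : Set.Finite (cs.wordProd '' {ω : List B | ω.length ≤ cs.length w}) :=
    (List.finite_length_le B _).image _
  refine Set.Finite.to_subtype (s := (parab cs T : Set W)) (hfin.subset ?_)
  intro v hv
  obtain ⟨ω, hω, hT, rfl⟩ := exists_reduced_parab cs hv
  obtain ⟨y, -, hl⟩ := key ω hω hT
  refine ⟨ω, ?_, rfl⟩
  simp at hl
  simp only [Set.mem_ofPred_eq]
  omega

theorem length_lt_of_no_descent (cs : CoxeterSystem M W) {U : Set B} (w : W)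
    (hw : ∀ s ∈ U, ¬ cs.IsRightDescent w s) (v : W) (hv : v ∈ parab cs U) (hv1 : v ≠ 1) :
    cs.length w < cs.length (w * v) := by
  classical
  obtain ⟨u, hu, hmin⟩ : ∃ u ∈ parab cs U, ∀ u' ∈ parab cs U,
      cs.length (w * u) ≤ cs.length (w * u') := by
    have hne : (parab cs U : Set W).Nonempty := ⟨1, (parab cs U).one_mem⟩
    exact ⟨Function.argminOn (fun u => cs.length (w * u)) (parab cs U : Set W) hne,
      Function.argminOn_mem _ _ hne, fun u' hu' => Function.argminOn_le (fun u => cs.length (w * u)) _ hu'⟩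
  obtain ⟨ξ, hξ, hxw⟩ := cs.exists_isReduced (w * u)
  have key : ∀ ω : List B, cs.IsReduced ω → (∀ i ∈ ω, i ∈ U) →
      cs.length (w * u * cs.wordProd ω) = cs.length (w * u) + ω.length := by
    intro ω
    induction ω using List.reverseRecOn with
    | nil => simp
    | append_singleton ω s ih =>
      intro hω hU
      have ih' := ih (isReduced_of_append cs hω) (fun i hi => hU i (by simp [hi]))
      by_cases hd : cs.IsRightDescent (w * u * cs.wordProd ω) s
      · exfalso
        rw [hxw, ← cs.wordProd_append] at hd
        obtain ⟨j, hj, he⟩ := exchange cs _ s hd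
        by_cases hjy : j < ξ.length
        · rw [List.eraseIdx_append_of_lt_length hjy, cs.wordProd_append, cs.wordProd_append,
            ← hxw] at he
          have h1 : cs.wordProd (ξ.eraseIdx j) =
              w * (u * (cs.wordProd ω * cs.simple s * (cs.wordProd ω)⁻¹)) := by
            have h0 := eq_mul_inv_of_mul_eq he.symm
            rw [h0]
            group
          have hω' : cs.wordProd ω ∈ parab cs U :=
            wordProd_mem_parab cs ω (fun i hi => hU i (by simp [hi]))
          have h2 := hmin (u * (cs.wordProd ω * cs.simple s * (cs.wordProd ω)⁻¹))
            (mul_mem hu (mul_mem (mul_mem hω' (simple_mem_parab cs (hU s (by simp))))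
              (inv_mem hω')))
          rw [← h1, hxw, hξ.eq] at h2
          have h3 := cs.length_wordProd_le (ξ.eraseIdx j)
          rw [List.length_eraseIdx_of_lt hjy] at h3
          omega
        · rw [List.eraseIdx_append_of_length_le (by omega), cs.wordProd_append,
            cs.wordProd_append, mul_assoc] at he
          have := mul_left_cancel he
          exact absurd this (eraseIdx_contra cs hω (by simp at hj; omega))
      · rw [cs.not_isRightDescent_iff] at hd
        rw [cs.wordProd_append, cs.wordProd_singleton, ← mul_assoc, hd, ih']
        simp
        omega
  have hu1 : u = 1 := by
    obtain ⟨ω, hω, hU, hωu⟩ := exists_reduced_parab cs (inv_mem hu)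
    rcases List.eq_nil_or_concat ω with rfl | ⟨ω', s, rfl⟩
    · simpa using hωu.symm
    · exfalso
      have h1 := key _ hω hU
      rw [hωu, mul_inv_cancel_right] at h1
      simp only [List.concat_eq_append] at hω hU hωu h1
      have h2 := key ω' (isReduced_of_append cs hω) (fun i hi => hU i (by simp [hi]))
      apply hw s (hU s (by simp))
      unfold CoxeterSystem.IsRightDescent
      have : w * cs.simple s = w * u * cs.wordProd ω' := by
        rw [cs.wordProd_append, cs.wordProd_singleton] at hωu
        have : cs.wordProd ω' = u⁻¹ * cs.simple s := by
          rw [← hωu, mul_assoc, cs.simple_mul_simple_self, mul_one]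
        rw [this]; group
      rw [this, h2, h1]
      simp
  subst hu1
  obtain ⟨ω, hω, hU, rfl⟩ := exists_reduced_parab cs hv
  have := key ω hω hU
  rw [mul_one] at this
  rw [this]
  have : ω ≠ [] := by rintro rfl; simp at hv1
  have := List.length_pos_iff.2 this
  omega

end Parabolic
/-! ### Triangular basis of functions on a Coxeter group -/

section Triangular

variable {V : Type} [AddCommGroup V] [Module ℚ V]

theorem finite_length_le_W (cs : CoxeterSystem M W) (n : ℕ) : Set.Finite {w : W | cs.length w ≤ n} := by
  have hfin : Set.Finite (cs.wordProd '' {ω : List B | ω.length ≤ n}) :=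
    (List.finite_length_le B _).image _
  refine hfin.subset ?_
  intro w hw
  obtain ⟨ω, hω, h⟩ := cs.exists_isReduced w
  subst h
  refine ⟨ω, ?_, rfl⟩
  have h1 : cs.length (cs.wordProd ω) ≤ n := hw
  rw [hω.eq] at h1
  exact h1

/-- parabolic generated by non-descents -/
def ndPar (cs : CoxeterSystem M W) (w : W) : Subgroup W := parab cs {s | ¬ cs.IsRightDescent w s}

theorem ndPar_length (cs : CoxeterSystem M W) {w x : W} (h : w⁻¹ * x ∈ ndPar cs w) :
    w = x ∨ cs.length w < cs.length x := by
  by_cases h1 : w = x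
  · exact Or.inl h1
  · right
    have := length_lt_of_no_descent cs w (U := {s | ¬ cs.IsRightDescent w s}) (fun s hs => hs)
      (w⁻¹ * x) h (by rwa [Ne, inv_mul_eq_one])
    simpa using this

theorem ndPar_finite (cs : CoxeterSystem M W) (x : W) :
    Set.Finite {w : W | w⁻¹ * x ∈ ndPar cs w} := by
  refine (finite_length_le_W cs (cs.length x)).subset ?_
  intro w hw
  have hw' : w⁻¹ * x ∈ ndPar cs w := hw
  have h2 : cs.length w ≤ cs.length x := by
    rcases ndPar_length cs hw' with h | h
    · rw [h]
    · exact h.le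
  exact h2

/-- index set -/
noncomputable def ndIdx (cs : CoxeterSystem M W) (x : W) : Finset W := (ndPar_finite cs x).toFinset

theorem mem_ndIdx (cs : CoxeterSystem M W) {w x : W} :
    w ∈ ndIdx cs x ↔ w⁻¹ * x ∈ ndPar cs w := by
  simp [ndIdx]

theorem self_mem_ndIdx (cs : CoxeterSystem M W) (x : W) : x ∈ ndIdx cs x := by
  rw [mem_ndIdx]; simp [one_mem]

/-- the summation map -/
noncomputable def triPhi (cs : CoxeterSystem M W) : (W → V) →ₗ[ℚ] (W → V) where
  toFun a x := ∑ w ∈ ndIdx cs x, a w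
  map_add' a b := by funext x; simp [Finset.sum_add_distrib]
  map_smul' c a := by funext x; simp [Finset.smul_sum]

theorem triPhi_apply (cs : CoxeterSystem M W) (a : W → V) (x : W) :
    triPhi cs a x = ∑ w ∈ ndIdx cs x, a w := rfl

open Classical in
theorem triPhi_apply' (cs : CoxeterSystem M W) (a : W → V) (x : W) :
    triPhi cs a x = a x + ∑ w ∈ (ndIdx cs x).erase x, a w := by
  rw [triPhi_apply, Finset.add_sum_erase _ _ (self_mem_ndIdx cs x)]

open Classical in
theorem lt_of_mem_erase (cs : CoxeterSystem M W) {w x : W} (h : w ∈ (ndIdx cs x).erase x) :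
    cs.length w < cs.length x := by
  rw [Finset.mem_erase, mem_ndIdx] at h
  exact (ndPar_length cs h.2).resolve_left h.1

theorem triPhi_low (cs : CoxeterSystem M W) (a : W → V) (x : W)
    (h : ∀ w, cs.length w < cs.length x → a w = 0) : triPhi cs a x = a x := by
  classical
  rw [triPhi_apply', Finset.sum_eq_zero, add_zero]
  intro w hw
  exact h w (lt_of_mem_erase cs hw)

theorem triPhi_injective (cs : CoxeterSystem M W) :
    Function.Injective (triPhi (V := V) cs) := by
  rw [← LinearMap.ker_eq_bot, LinearMap.ker_eq_bot']
  intro a ha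
  funext x
  induction h : cs.length x using Nat.strong_induction_on generalizing x with
  | _ n ih =>
    subst h
    rw [← triPhi_low cs a x (fun w hw => ih _ hw w rfl), ha]

open Classical in
/-- the inverse of the summation map -/
noncomputable def triInv (cs : CoxeterSystem M W) (f : W → V) : W → V :=
  WellFounded.fix (measure cs.length).wf
    (fun x rec => f x - ∑ w : ↥((ndIdx cs x).erase x), rec w.1 (lt_of_mem_erase cs w.2))

theorem triPhi_surjective (cs : CoxeterSystem M W) :
    Function.Surjective (triPhi (V := V) cs) := by
  classical
  intro f
  refine ⟨triInv cs f, ?_⟩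
  funext x
  rw [triPhi_apply']
  have : triInv cs f x = f x - ∑ w : ↥((ndIdx cs x).erase x), triInv cs f w.1 := by
    rw [triInv, WellFounded.fix_eq]
  rw [this, Finset.sum_coe_sort ((ndIdx cs x).erase x) (triInv cs f)]
  simp

/-- equivalence -/
noncomputable def triEquiv (cs : CoxeterSystem M W) : (W → V) ≃ₗ[ℚ] (W → V) :=
  LinearEquiv.ofBijective (triPhi cs) ⟨triPhi_injective cs, triPhi_surjective cs⟩

theorem triEquiv_apply (cs : CoxeterSystem M W) (a : W → V) : triEquiv cs a = triPhi cs a := rfl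

open Classical in
/-- mask -/
noncomputable def triMask (cs : CoxeterSystem M W) (s : B) : (W → V) →ₗ[ℚ] (W → V) where
  toFun a w := if cs.IsRightDescent w s then 0 else a w
  map_add' a b := by funext x; simp only [Pi.add_apply]; split_ifs <;> simp
  map_smul' c a := by funext x; simp only [Pi.smul_apply]; split_ifs <;> simp

open Classical in
theorem triMask_apply (cs : CoxeterSystem M W) (s : B) (a : W → V) (w : W) :
    triMask cs s a w = if cs.IsRightDescent w s then 0 else a w := rfl

theorem triPhi_mul_simple (cs : CoxeterSystem M W) (s : B) (a : W → V)
    (h : ∀ w, cs.IsRightDescent w s → a w = 0) (x : W) :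
    triPhi cs a (x * cs.simple s) = triPhi cs a x := by
  classical
  have key : ∀ y, triPhi cs a y = ∑ w ∈ (ndIdx cs y).filter (fun w => ¬ cs.IsRightDescent w s), a w := by
    intro y
    rw [triPhi_apply, Finset.sum_filter]
    refine Finset.sum_congr rfl fun w _ => ?_
    split_ifs with h1
    · exact h w h1
    · rfl
  rw [key, key]
  congr 1
  ext w
  simp only [Finset.mem_filter, mem_ndIdx]
  refine and_congr_left fun hw => ?_
  rw [← mul_assoc]
  exact Subgroup.mul_mem_cancel_right _ (simple_mem_parab cs hw)

theorem triPhi_inv_iff (cs : CoxeterSystem M W) (s : B) (a : W → V) :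
    (∀ x, triPhi cs a (x * cs.simple s) = triPhi cs a x) ↔ triMask cs s a = a := by
  classical
  constructor
  · intro h
    set b := a - triMask cs s a with hb
    have hb0 : ∀ w, ¬ cs.IsRightDescent w s → b w = 0 := by
      intro w hw
      simp [hb, triMask_apply, hw]
    have hbi : ∀ x, triPhi cs b (x * cs.simple s) = triPhi cs b x := by
      intro x
      rw [hb, map_sub, Pi.sub_apply, Pi.sub_apply, h, triPhi_mul_simple]
      intro w hw
      simp [triMask_apply, hw]
    have : ∀ x, b x = 0 := by
      intro x
      induction hn : cs.length x using Nat.strong_induction_on generalizing x with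
      | _ n ih =>
        subst hn
        by_cases hx : cs.IsRightDescent x s
        · have h1 := triPhi_low cs b x (fun w hw => ih _ hw w rfl)
          have h2 := triPhi_low cs b (x * cs.simple s)
            (fun w hw => ih _ (lt_trans hw hx) w rfl)
          rw [← h1, ← hbi, h2]
          exact ih _ hx _ rfl
        · exact hb0 x hx
    have h0 : b = 0 := funext this
    exact (sub_eq_zero.1 h0).symm
  · intro h x
    apply triPhi_mul_simple
    intro w hw
    rw [← h, triMask_apply, if_pos hw]

theorem triMask_idem (cs : CoxeterSystem M W) (s : B) (a : W → V) :
    triMask cs s (triMask cs s a) = triMask cs s a := by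
  funext w; simp only [triMask_apply]; split_ifs <;> rfl

theorem triMask_comm (cs : CoxeterSystem M W) (s t : B) (a : W → V) :
    triMask cs s (triMask cs t a) = triMask cs t (triMask cs s a) := by
  funext w; simp only [triMask_apply]; split_ifs <;> rfl

theorem coxeter_good (cs : CoxeterSystem M W) {E : Type} [AddCommGroup E] [Module ℚ E]
    (e : E ≃ₗ[ℚ] (W → V)) (d : E →ₗ[ℚ] E) (hd : ∀ x, d (d x) = 0)
    (hinv : ∀ s f, (∀ x, e f (x * cs.simple s) = e f x) →
      ∀ x, e (d f) (x * cs.simple s) = e (d f) x)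
    (hfin : ∀ T : Finset B, Finite (parab cs (T : Set B)) → ∀ f,
      (∀ s ∈ T, ∀ x, e (d f) (x * cs.simple s) = e (d f) x) →
      ∃ y, ∀ s ∈ T, ∀ x, e (f - d y) (x * cs.simple s) = e (f - d y) x)
    (f : E) (hf : ∀ s x, e (d f) (x * cs.simple s) = e (d f) x) :
    ∃ y, ∀ s x, e (f - d y) (x * cs.simple s) = e (f - d y) x := by
  classical
  let ε : E ≃ₗ[ℚ] (W → V) := e.trans (triEquiv cs).symm
  let p : B → E →ₗ[ℚ] E := fun s => ε.symm.toLinearMap ∘ₗ triMask cs s ∘ₗ ε.toLinearMap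
  have hp : ∀ s f, p s f = ε.symm (triMask cs s (ε f)) := fun s f => rfl
  have hfix : ∀ s f, p s f = f ↔ ∀ x, e f (x * cs.simple s) = e f x := by
    intro s f
    have h1 : e f = triPhi cs (ε f) := by
      have : triEquiv cs (ε f) = e f := by simp [ε]
      rw [← this, triEquiv_apply]
    rw [h1, triPhi_inv_iff, hp, LinearEquiv.symm_apply_eq]
  have main := good_fixSub p d hd (by intro s f; simp [hp, triMask_idem])
    (by intro s t f; simp only [hp, LinearEquiv.apply_symm_apply]; rw [triMask_comm])
    (by intro s f; rw [hfix, hfix]; exact hinv s f)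
    (by
      intro T
      by_cases hT : ∃ w, ∀ s ∈ T, cs.IsRightDescent w s
      · left
        obtain ⟨w, hw⟩ := hT
        have hF := finite_parab_of_descents cs (T := (T : Set B)) w hw
        intro f hf
        rw [mem_fixSub] at hf
        obtain ⟨y, hy⟩ := hfin T hF f (fun s hs => (hfix _ _).1 (hf s hs))
        exact ⟨y, fun s hs => (hfix _ _).2 (hy s hs)⟩
      · right
        push Not at hT
        choose σ hσ hσ' using hT
        rw [eq_top_iff]
        intro f _
        have hdec : f = ∑ s ∈ T, ε.symm (fun w => if σ w = s then ε f w else 0) := by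
          rw [← map_sum, LinearEquiv.eq_symm_apply]
          funext w
          rw [Finset.sum_apply, Finset.sum_ite_eq, if_pos (hσ w)]
        rw [hdec]
        refine Submodule.sum_mem _ fun s hs => ?_
        refine Submodule.mem_iSup_of_mem s (Submodule.mem_iSup_of_mem hs ?_)
        rw [mem_fixSub]
        intro t ht
        simp only [insert_empty_eq, Finset.mem_singleton] at ht
        subst ht
        rw [hp, LinearEquiv.apply_symm_apply]
        congr 1
        funext w
        rw [triMask_apply]
        split_ifs with h1 h2
        · subst h2; exact absurd h1 (hσ' w)
        · rfl
        · rfl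
        · rfl)
    Finset.univ f (fun s _ => (hfix _ _).2 (hf s))
  obtain ⟨y, hy⟩ := main
  exact ⟨y, fun s => (hfix _ _).1 (hy s (Finset.mem_univ s))⟩

end Triangular
/-! ### Invariant cochains -/

section InvariantCochains

variable {G : Type} [Group G]

/-- invariant reduced cochains -/
def InvL (K : Subgroup G) : Submodule ℚ (List G → ℚ) where
  carrier := {f | f [] = 0 ∧ ∀ k ∈ K, ∀ l : List G, f (l.map (k * ·)) = f l}
  add_mem' := by
    rintro a b ⟨ha, ha'⟩ ⟨hb, hb'⟩
    refine ⟨by simp [ha, hb], fun k hk l => ?_⟩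
    simp only [Pi.add_apply, ha' k hk, hb' k hk]
  zero_mem' := ⟨rfl, fun _ _ _ => rfl⟩
  smul_mem' := by
    rintro c a ⟨ha, ha'⟩
    refine ⟨by simp [ha], fun k hk l => ?_⟩
    simp only [Pi.smul_apply, ha' k hk]

theorem mem_InvL {K : Subgroup G} {f : List G → ℚ} :
    f ∈ InvL K ↔ f [] = 0 ∧ ∀ k ∈ K, ∀ l : List G, f (l.map (k * ·)) = f l := Iff.rfl

theorem InvL_mono {K L : Subgroup G} (h : K ≤ L) : InvL L ≤ InvL K :=
  fun _ hf => ⟨hf.1, fun k hk => hf.2 k (h hk)⟩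

theorem dL_inv {f : List G → ℚ} {g : G} (h : ∀ l : List G, f (l.map (g * ·)) = f l) (l : List G) :
    dL G f (l.map (g * ·)) = dL G f l := by
  rw [← dL_map, show (fun l : List G => f (l.map (g * ·))) = f from funext h]

theorem dL_mem_InvL {K : Subgroup G} {f : List G → ℚ} (hf : f ∈ InvL K) : dL G f ∈ InvL K :=
  ⟨dL_nil f, fun k hk l => dL_inv (hf.2 k hk) l⟩

theorem lH_mem_InvL {K : Subgroup G} {f : List G → ℚ} (hf : f ∈ InvL K) (r : G → G)
    (hr : ∀ k ∈ K, ∀ x, r (k * x) = k * r x) : lH r f ∈ InvL K := by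
  refine ⟨lH_nil r f, fun k hk l => ?_⟩
  rw [← lH_map r (k * ·) (hr k hk), show (fun l : List G => f (l.map (k * ·))) = f from
    funext (hf.2 k hk)]

theorem map_mul_mul (a b : G) (l : List G) :
    (l.map (b * ·)).map (a * ·) = l.map ((a * b) * ·) := by
  simp [mul_assoc]

theorem map_one_mul (l : List G) : l.map ((1 : G) * ·) = l := by simp

/-- stabilizer -/
def stabL (f : List G → ℚ) : Subgroup G where
  carrier := {g | ∀ l : List G, f (l.map (g * ·)) = f l}
  mul_mem' := by
    intro a b ha hb l
    rw [← map_mul_mul, ha, hb]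
  one_mem' := by intro l; rw [map_one_mul]
  inv_mem' := by
    intro a ha l
    rw [← ha (l.map (a⁻¹ * ·)), map_mul_mul, mul_inv_cancel, map_one_mul]

theorem mem_stabL {f : List G → ℚ} {g : G} :
    g ∈ stabL f ↔ ∀ l : List G, f (l.map (g * ·)) = f l := Iff.rfl

variable {Q : Type} [Group Q]

theorem finite_good (φ : G →* Q) (hφ : Function.Surjective φ)
    (hc : ∀ k ∈ φ.ker, ∀ x, k * x = x * k) (P : Subgroup Q) [Finite P] (f : List G → ℚ)
    (hf : f ∈ InvL φ.ker)
    (hdf : ∀ g, φ g ∈ P → g ∈ stabL (dL G f)) :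
    ∃ y ∈ InvL φ.ker, ∀ g, φ g ∈ P → g ∈ stabL (f - dL G y) := by
  classical
  have := Fintype.ofFinite P
  choose σ hσ using hφ
  have hN : (Fintype.card P : ℚ) ≠ 0 := by
    exact_mod_cast Fintype.card_ne_zero
  let A : (List G → ℚ) → List G → ℚ :=
    fun f l => (Fintype.card P : ℚ)⁻¹ * ∑ w : P, f (l.map (σ w * ·))
  -- `f` only depends on the class
  have hcls : ∀ F ∈ InvL φ.ker, ∀ g g' : G, φ g = φ g' → ∀ l : List G,
      F (l.map (g * ·)) = F (l.map (g' * ·)) := by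
    intro F hF g g' h l
    have : g = (g * g'⁻¹) * g' := by group
    rw [this, ← map_mul_mul, hF.2]
    rw [MonoidHom.mem_ker, map_mul, map_inv, h, mul_inv_cancel]
  have hAinv : ∀ F ∈ InvL φ.ker, ∀ g, φ g ∈ P → g ∈ stabL (A F) := by
    intro F hF g hg l
    simp only [A]
    congr 1
    refine Fintype.sum_equiv (Equiv.mulRight (⟨φ g, hg⟩ : P)) _ _ fun w => ?_
    rw [map_mul_mul]
    apply hcls F hF
    simp [hσ]
  have hAfix : ∀ F : List G → ℚ, (∀ g, φ g ∈ P → g ∈ stabL F) → A F = F := by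
    intro F hF
    funext l
    simp only [A]
    rw [Finset.sum_congr rfl (fun (w : P) _ => hF (σ w) (by rw [hσ]; exact w.2) l)]
    simp [hN]
  have hdA : ∀ F : List G → ℚ, dL G (A F) = A (dL G F) := by
    intro F
    have : A F = (Fintype.card P : ℚ)⁻¹ • ∑ w : P, fun l : List G => F (l.map (σ w * ·)) := by
      funext l; simp [A]
    rw [this, map_smul, map_sum]
    funext l
    simp [A, dL_map]
  have hker : ∀ k ∈ φ.ker, φ k ∈ P := by
    intro k hk; rw [MonoidHom.mem_ker] at hk; rw [hk]; exact P.one_mem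
  have hAmem : A f ∈ InvL φ.ker := by
    refine ⟨by simp [A, hf.1], fun k hk l => hAinv f hf k (hker k hk) l⟩
  set x := f - A f with hx
  have hxm : x ∈ InvL φ.ker := Submodule.sub_mem _ hf hAmem
  have hxd : dL G x = 0 := by
    rw [hx, map_sub, hdA, hAfix _ hdf, sub_self]
  have hAx : A x = 0 := by
    have h1 : A x = A f - A (A f) := by
      funext l
      simp only [A, hx, Pi.sub_apply, Finset.sum_sub_distrib, mul_sub]
    rw [h1, hAfix (A f) (hAinv f hf), sub_self]
  refine ⟨-((Fintype.card P : ℚ)⁻¹ • ∑ w : P, lH (σ w * ·) x), ?_, ?_⟩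
  · refine Submodule.neg_mem _ (Submodule.smul_mem _ _ (Submodule.sum_mem _ fun w _ => ?_))
    refine lH_mem_InvL hxm _ fun k hk z => ?_
    rw [← mul_assoc, ← mul_assoc, hc k hk]
  · have : dL G (-((Fintype.card P : ℚ)⁻¹ • ∑ w : P, lH (σ w * ·) x)) = x := by
      rw [map_neg, map_smul, map_sum]
      rw [Finset.sum_congr rfl (fun (w : P) _ => (homotopy_of_closed (σ w * ·) x hxd).symm)]
      have h2 : (Fintype.card P : ℚ)⁻¹ • ∑ w : P, ((fun l : List G => x (l.map (σ w * ·))) - x) =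
          A x - x := by
        funext l
        simp [A, Finset.sum_sub_distrib, mul_sub, hN]
      rw [h2, hAx]
      simp
    rw [this, hx, sub_sub_cancel]
    exact hAinv f hf

/-- coordinates -/
noncomputable def hatL (φ : G →* Q) (σ : Q → G) (hσ : ∀ w, φ (σ w) = w) :
    ↥(InvL φ.ker) ≃ₗ[ℚ] (Q → List G → ℚ) where
  toFun f w t := f.1 ((1 :: t).map (σ w⁻¹ * ·))
  map_add' _ _ := rfl
  map_smul' _ _ := rfl
  invFun F := ⟨fun l => match l with
    | [] => 0
    | x :: t => F (φ x)⁻¹ (t.map (x⁻¹ * ·)), rfl, by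
      rintro k hk (_ | ⟨x, t⟩)
      · rfl
      · rw [MonoidHom.mem_ker] at hk
        simp only [List.map_cons, map_mul, hk, one_mul, map_mul_mul, mul_inv_rev,
          inv_mul_cancel_right]⟩
  left_inv := by
    rintro ⟨f, hf⟩
    apply Subtype.ext
    funext l
    rcases l with _ | ⟨x, t⟩
    · exact hf.1.symm
    · show f ((1 :: t.map (x⁻¹ * ·)).map (σ ((φ x)⁻¹)⁻¹ * ·)) = f (x :: t)
      have hk : x * (σ ((φ x)⁻¹)⁻¹)⁻¹ ∈ φ.ker := by
        rw [MonoidHom.mem_ker, map_mul, map_inv, hσ]; simp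
      rw [← hf.2 _ hk, map_mul_mul]
      simp
  right_inv := by
    intro F
    funext w t
    show F (φ (σ w⁻¹ * 1))⁻¹ ((t.map (σ w⁻¹ * ·)).map ((σ w⁻¹ * 1)⁻¹ * ·)) = F w t
    rw [map_mul_mul]
    simp [hσ]

theorem hatL_apply (φ : G →* Q) (σ : Q → G) (hσ : ∀ w, φ (σ w) = w) (f : ↥(InvL φ.ker))
    (w : Q) (t : List G) : hatL φ σ hσ f w t = f.1 ((1 :: t).map (σ w⁻¹ * ·)) := rfl

theorem hatL_eq (φ : G →* Q) (σ : Q → G) (hσ : ∀ w, φ (σ w) = w) (f : ↥(InvL φ.ker))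
    (w : Q) (t : List G) (g : G) (hg : φ g = w⁻¹) :
    hatL φ σ hσ f w t = f.1 ((1 :: t).map (g * ·)) := by
  rw [hatL_apply]
  have hk : σ w⁻¹ * g⁻¹ ∈ φ.ker := by
    rw [MonoidHom.mem_ker, map_mul, map_inv, hσ, hg]; simp
  rw [← f.2.2 _ hk ((1 :: t).map (g * ·)), map_mul_mul, inv_mul_cancel_right]

theorem hatL_inv_iff (φ : G →* Q) (σ : Q → G) (hσ : ∀ w, φ (σ w) = w) (f : ↥(InvL φ.ker))
    (s : Q) (g : G) (hg : φ g = s⁻¹) :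
    (∀ x, hatL φ σ hσ f (x * s) = hatL φ σ hσ f x) ↔ g ∈ stabL f.1 := by
  constructor
  · intro h l
    rcases l with _ | ⟨x, t⟩
    · rfl
    · have h1 := congrFun (h (φ x)⁻¹) (t.map (x⁻¹ * ·))
      rw [hatL_eq φ σ hσ f _ _ (g * x) (by simp [hg]), hatL_eq φ σ hσ f _ _ x (by simp)] at h1
      simpa [mul_assoc, Function.comp_def] using h1
  · intro h x
    funext t
    rw [hatL_eq φ σ hσ f _ _ (g * σ x⁻¹) (by simp [hg, hσ]), hatL_apply, ← map_mul_mul]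
    exact h _

theorem ker_le_stabL (φ : G →* Q) {f : List G → ℚ} (hf : f ∈ InvL φ.ker) : φ.ker ≤ stabL f :=
  fun k hk => hf.2 k hk

theorem coxeter_InvL_good (cs : CoxeterSystem M W) (φ : G →* W) (hφ : Function.Surjective φ)
    (hc : ∀ k ∈ φ.ker, ∀ x, k * x = x * k) (f : List G → ℚ)
    (hf : f ∈ InvL φ.ker) (hdf : dL G f ∈ InvL (⊤ : Subgroup G)) :
    ∃ y ∈ InvL φ.ker, f - dL G y ∈ InvL (⊤ : Subgroup G) := by
  classical
  have hφ' := hφ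
  choose σ hσ using hφ
  let e := hatL φ σ hσ
  have hgs : ∀ s, φ (σ (cs.simple s)) = (cs.simple s)⁻¹ := by intro s; rw [hσ, cs.inv_simple]
  let d : ↥(InvL φ.ker) →ₗ[ℚ] ↥(InvL φ.ker) := (dL G).restrict (fun _ h => dL_mem_InvL h)
  have hd : ∀ f, (d f).1 = dL G f.1 := fun _ => rfl
  have hiff : ∀ (f : ↥(InvL φ.ker)) s, (∀ x, e f (x * cs.simple s) = e f x) ↔
      σ (cs.simple s) ∈ stabL f.1 := fun f s => hatL_inv_iff φ σ hσ f _ _ (hgs s)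
  -- from generators to the full group
  have hgen : ∀ (T : Set B) (F : List G → ℚ), F ∈ InvL φ.ker →
      (∀ s ∈ T, σ (cs.simple s) ∈ stabL F) → ∀ g, φ g ∈ parab cs T → g ∈ stabL F := by
    intro T F hF hs g hg
    have h1 : parab cs T ≤ (stabL F).map φ := by
      rw [parab, Subgroup.closure_le]
      rintro _ ⟨s, hsT, rfl⟩
      exact ⟨_, hs s hsT, hσ _⟩
    obtain ⟨g', hg', he⟩ := h1 hg
    have : g = (g * g'⁻¹) * g' := by group
    rw [this]
    refine mul_mem (ker_le_stabL φ hF ?_) hg'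
    rw [MonoidHom.mem_ker, map_mul, map_inv, ← he, mul_inv_cancel]
  have main := coxeter_good cs e d
    (by intro x; apply Subtype.ext; exact dL_dL x.1)
    (by
      intro s f hf
      rw [hiff] at hf ⊢
      exact fun l => dL_inv hf l)
    (by
      intro T hT f hf
      obtain ⟨y, hy, h⟩ := finite_good φ hφ' hc (parab cs (T : Set B)) f.1 f.2
        (hgen _ _ (dL_mem_InvL f.2) (fun s hs => (hiff (d f) s).1 (hf s hs)))
      refine ⟨⟨y, hy⟩, fun s hs => ?_⟩
      rw [hiff]
      exact h _ (by rw [hσ]; exact simple_mem_parab cs hs))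
    ⟨f, hf⟩
    (by
      intro s
      rw [hiff]
      exact fun l => hdf.2 _ (Subgroup.mem_top _) l)
  obtain ⟨y, hy⟩ := main
  refine ⟨y.1, y.2, ?_⟩
  have hmem : f - dL G y.1 ∈ InvL φ.ker := Submodule.sub_mem _ hf (dL_mem_InvL y.2)
  refine ⟨hmem.1, fun g _ l => ?_⟩
  refine hgen Set.univ (f - dL G y.1) hmem (fun s _ => (hiff _ s).1 (hy s)) g ?_ l
  have : parab cs Set.univ = ⊤ := by
    rw [parab, Set.image_univ, cs.subgroup_closure_range_simple]
  rw [this]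
  trivial

end InvariantCochains
/-! ### Restriction to the kernel -/

section Restriction

variable {G : Type} [Group G] {Q : Type} [Group Q]

theorem exists_retr (φ : G →* Q) : ∃ r : G → φ.ker,
    (∀ (k : φ.ker) (x : G), r (k.1 * x) = k * r x) ∧ ∀ k : φ.ker, r k.1 = k := by
  classical
  let τ : Q → G := fun w => if h : ∃ g, φ g = w then h.choose else 1
  have hτ : ∀ g, φ (τ (φ g)) = φ g := by
    intro g
    have h : ∃ g', φ g' = φ g := ⟨g, rfl⟩
    simp only [τ, dif_pos h]
    exact h.choose_spec
  let r0 : G → φ.ker := fun x => ⟨x * (τ (φ x))⁻¹, by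
    rw [MonoidHom.mem_ker, map_mul, map_inv, hτ, mul_inv_cancel]⟩
  have h0 : ∀ (k : φ.ker) (x : G), r0 (k.1 * x) = k * r0 x := by
    intro k x
    apply Subtype.ext
    have hk : φ k.1 = 1 := k.2
    simp only [r0, Subgroup.coe_mul, map_mul, hk, one_mul, mul_assoc]
  refine ⟨fun x => r0 x * (r0 1)⁻¹, fun k x => ?_, fun k => ?_⟩
  · simp only [h0, mul_assoc]
  · have := h0 k 1
    rw [mul_one] at this
    simp only [this, mul_inv_cancel_right]

/-- pull back along a map of sets -/
def pullL {X Y : Type} (r : X → Y) : (List Y → ℚ) →ₗ[ℚ] (List X → ℚ) where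
  toFun f l := f (l.map r)
  map_add' _ _ := rfl
  map_smul' _ _ := rfl

theorem pullL_apply {X Y : Type} (r : X → Y) (f : List Y → ℚ) (l : List X) :
    pullL r f l = f (l.map r) := rfl

theorem dL_pullL {X Y : Type} (r : X → Y) (f : List Y → ℚ) :
    dL X (pullL r f) = pullL r (dL Y f) := funext fun l => dL_map r f l

theorem res_mem (K : Subgroup G) {f : List G → ℚ} (hf : f ∈ InvL K) :
    pullL (Subtype.val : K → G) f ∈ InvL (⊤ : Subgroup K) := by
  refine ⟨hf.1, fun k _ l => ?_⟩
  rw [pullL_apply, pullL_apply, ← hf.2 k.1 k.2 (l.map Subtype.val), List.map_map, List.map_map]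
  rfl

theorem ext_mem (K : Subgroup G) (r : G → K) (hr : ∀ (k : K) (x : G), r (k.1 * x) = k * r x)
    {f : List K → ℚ} (hf : f ∈ InvL (⊤ : Subgroup K)) : pullL r f ∈ InvL K := by
  refine ⟨hf.1, fun k hk l => ?_⟩
  rw [pullL_apply, pullL_apply, ← hf.2 ⟨k, hk⟩ trivial (l.map r)]
  have := hr ⟨k, hk⟩
  simp only at this
  simp [Function.comp_def, this]

theorem res_ext (K : Subgroup G) (r : G → K) (hr : ∀ k : K, r k.1 = k) (f : List K → ℚ) :
    pullL (Subtype.val : K → G) (pullL r f) = f := by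
  funext l
  rw [pullL_apply, pullL_apply, List.map_map, show r ∘ (Subtype.val : K → G) = id from funext hr,
    List.map_id]

theorem ext_res_closed (K : Subgroup G) (r : G → K) (f : List G → ℚ) (hf : dL G f = 0) :
    pullL r (pullL (Subtype.val : K → G) f) - f = dL G (lH (fun x => (r x).1) f) := by
  rw [← homotopy_of_closed _ f hf]
  funext l
  rw [Pi.sub_apply, Pi.sub_apply, pullL_apply, pullL_apply, List.map_map]
  rfl

theorem lH_r_mem (K : Subgroup G) (r : G → K) (hr : ∀ (k : K) (x : G), r (k.1 * x) = k * r x)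
    {f : List G → ℚ} (hf : f ∈ InvL K) : lH (fun x => (r x).1) f ∈ InvL K :=
  lH_mem_InvL hf _ fun k hk x => by
    have := hr ⟨k, hk⟩ x
    simp only at this
    simp [this]

theorem cox_inj (cs : CoxeterSystem M W) (φ : G →* W) (hφ : Function.Surjective φ)
    (hc : ∀ k ∈ φ.ker, ∀ x, k * x = x * k) (z : List G → ℚ)
    (hz : z ∈ InvL (⊤ : Subgroup G)) (hdz : dL G z = 0) (u : List φ.ker → ℚ)
    (hu : u ∈ InvL (⊤ : Subgroup φ.ker))
    (h : pullL (Subtype.val : φ.ker → G) z = dL _ u) :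
    ∃ y ∈ InvL (⊤ : Subgroup G), z = dL G y := by
  obtain ⟨r, hr, hr'⟩ := exists_retr φ
  have hzK : z ∈ InvL φ.ker := InvL_mono le_top hz
  have h1 := ext_res_closed φ.ker r z hdz
  rw [h, ← dL_pullL] at h1
  have h2 : z = dL G (pullL r u - lH (fun x => (r x).1) z) := by
    rw [map_sub, ← h1]; simp
  have hv : pullL r u - lH (fun x => (r x).1) z ∈ InvL φ.ker :=
    Submodule.sub_mem _ (ext_mem φ.ker r hr hu) (lH_r_mem φ.ker r hr hzK)
  obtain ⟨y, hy, hy'⟩ := coxeter_InvL_good cs φ hφ hc _ hv (by rwa [← h2])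
  refine ⟨_, hy', ?_⟩
  rw [map_sub, dL_dL, sub_zero, ← h2]

theorem cox_surj (cs : CoxeterSystem M W) (φ : G →* W) (hφ : Function.Surjective φ)
    (hc : ∀ k ∈ φ.ker, ∀ x, k * x = x * k) (z : List φ.ker → ℚ)
    (hz : z ∈ InvL (⊤ : Subgroup φ.ker)) (hdz : dL _ z = 0) :
    ∃ x ∈ InvL (⊤ : Subgroup G), dL G x = 0 ∧ ∃ u ∈ InvL (⊤ : Subgroup φ.ker),
      pullL (Subtype.val : φ.ker → G) x - z = dL _ u := by
  obtain ⟨r, hr, hr'⟩ := exists_retr φ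
  have hf := ext_mem φ.ker r hr hz
  have hdf : dL G (pullL r z) = 0 := by rw [dL_pullL, hdz, map_zero]
  obtain ⟨y, hy, hy'⟩ := coxeter_InvL_good cs φ hφ hc _ hf (by rw [hdf]; exact Submodule.zero_mem _)
  refine ⟨_, hy', by rw [map_sub, dL_dL, hdf, sub_zero], _,
    Submodule.neg_mem _ (res_mem φ.ker hy), ?_⟩
  rw [map_sub, res_ext φ.ker r hr', map_neg, dL_pullL]
  abel

end Restriction
/-! ### Homology of complexes of modules, elementwise -/

section ModHomology

open CategoryTheory

/-- class of a cycle -/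
noncomputable def clS (S : ShortComplex (ModuleCat.{0} ℚ)) :
    ↥(LinearMap.ker S.g.hom) →ₗ[ℚ] S.homology :=
  (S.moduleCatCyclesIso.inv ≫ S.homologyπ).hom

theorem clS_surj (S : ShortComplex (ModuleCat.{0} ℚ)) : Function.Surjective (clS S) := by
  have : Epi (S.moduleCatCyclesIso.inv ≫ S.homologyπ) := inferInstance
  exact (ModuleCat.epi_iff_surjective _).1 this

theorem ι_clS (S : ShortComplex (ModuleCat.{0} ℚ)) (z : ↥(LinearMap.ker S.g.hom)) :
    S.homologyι.hom (clS S z) = S.pOpcycles.hom z.1 := by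
  have : (S.moduleCatCyclesIso.inv ≫ S.homologyπ) ≫ S.homologyι =
    S.moduleCatLeftHomologyData.i ≫ S.pOpcycles := by
    rw [Category.assoc, ShortComplex.homology_π_ι, ← Category.assoc,
      ShortComplex.moduleCatCyclesIso_inv_iCycles]
  exact congrArg (fun f => f.hom z) this

theorem ι_inj (S : ShortComplex (ModuleCat.{0} ℚ)) : Function.Injective S.homologyι.hom :=
  (ModuleCat.mono_iff_injective _).1 inferInstance

theorem clS_eq_zero (S : ShortComplex (ModuleCat.{0} ℚ)) (z : ↥(LinearMap.ker S.g.hom)) :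
    clS S z = 0 ↔ z.1 ∈ LinearMap.range S.f.hom := by
  rw [← S.moduleCat_pOpcycles_eq_zero_iff, ← (ι_inj S).eq_iff, map_zero, ι_clS]

theorem clS_eq_iff (S : ShortComplex (ModuleCat.{0} ℚ)) (z w : ↥(LinearMap.ker S.g.hom)) :
    clS S z = clS S w ↔ z.1 - w.1 ∈ LinearMap.range S.f.hom := by
  rw [← sub_eq_zero, ← map_sub, clS_eq_zero]
  rfl

theorem clS_map {S T : ShortComplex (ModuleCat.{0} ℚ)} (f : S ⟶ T)
    (z : ↥(LinearMap.ker S.g.hom)) (w : ↥(LinearMap.ker T.g.hom)) (h : f.τ₂.hom z.1 = w.1) :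
    (ShortComplex.homologyMap f).hom (clS S z) = clS T w := by
  apply ι_inj
  rw [ι_clS, ← h]
  have h1 := congrArg (fun f => f.hom (clS S z)) (ShortComplex.homologyι_naturality f)
  have h2 := congrArg (fun f => f.hom z.1) (ShortComplex.p_opcyclesMap f)
  simp only [ModuleCat.hom_comp, LinearMap.comp_apply] at h1 h2
  rw [h1, ι_clS, h2]

variable (C : CochainComplex (ModuleCat.{0} ℚ) ℕ)

theorem mem_ker_sc (n : ℕ) (x : C.X n) :
    x ∈ LinearMap.ker (C.sc n).g.hom ↔ (C.d n (n + 1)).hom x = 0 := by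
  have : ∀ j, j = n + 1 → ((C.d n j).hom x = 0 ↔ (C.d n (n + 1)).hom x = 0) := by
    rintro _ rfl; rfl
  exact this _ (CochainComplex.next ℕ n)

theorem mem_range_sc_succ (n : ℕ) (x : C.X (n + 1)) :
    x ∈ LinearMap.range (C.sc (n + 1)).f.hom ↔ ∃ y : C.X n, (C.d n (n + 1)).hom y = x := by
  have : ∀ j, j = n → ((x ∈ LinearMap.range (C.d j (n + 1)).hom) ↔
      ∃ y : C.X n, (C.d n (n + 1)).hom y = x) := by
    rintro _ rfl; rfl
  exact this _ (CochainComplex.prev_nat_succ n)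

theorem mem_range_sc_zero (x : C.X 0) :
    x ∈ LinearMap.range (C.sc 0).f.hom ↔ x = 0 := by
  have : ∀ j, j = 0 → ((x ∈ LinearMap.range (C.d j 0).hom) ↔ x = 0) := by
    rintro _ rfl
    rw [C.shape 0 0 (by simp)]
    constructor
    · rintro ⟨y, rfl⟩; rfl
    · rintro rfl; exact zero_mem _
  exact this _ CochainComplex.prev_nat_zero

/-- boundary relation -/
theorem isIso_of_elem {C D : CochainComplex (ModuleCat.{0} ℚ) ℕ} (f : C ⟶ D) (n : ℕ)
    (hinj : ∀ x : C.X n, (C.d n (n + 1)).hom x = 0 →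
      (f.f n).hom x ∈ LinearMap.range (D.sc n).f.hom → x ∈ LinearMap.range (C.sc n).f.hom)
    (hsurj : ∀ y : D.X n, (D.d n (n + 1)).hom y = 0 →
      ∃ x : C.X n, (C.d n (n + 1)).hom x = 0 ∧
        (f.f n).hom x - y ∈ LinearMap.range (D.sc n).f.hom) :
    IsIso (HomologicalComplex.homologyMap f n) := by
  have hk : ∀ x : C.X n, (C.d n (n + 1)).hom x = 0 →
      (f.f n).hom x ∈ LinearMap.ker (D.sc n).g.hom := by
    intro x hx
    rw [mem_ker_sc]
    have := congrArg (fun g => g.hom x) (f.comm n (n + 1))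
    simp only [ModuleCat.hom_comp, LinearMap.comp_apply, hx, map_zero] at this
    exact this
  have key : ∀ (z : ↥(LinearMap.ker (C.sc n).g.hom)) (hz : (f.f n).hom z.1 ∈ LinearMap.ker (D.sc n).g.hom),
      (HomologicalComplex.homologyMap f n).hom (clS _ z) = clS (D.sc n) ⟨(f.f n).hom z.1, hz⟩ := by
    intro z hz
    exact clS_map ((HomologicalComplex.shortComplexFunctor _ _ n).map f) z _ rfl
  rw [ConcreteCategory.isIso_iff_bijective]
  constructor
  · have : Function.Injective (HomologicalComplex.homologyMap f n).hom := by
      rw [← LinearMap.ker_eq_bot, LinearMap.ker_eq_bot']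
      intro c hc
      obtain ⟨z, rfl⟩ := clS_surj _ c
      have hz := (mem_ker_sc C n z.1).1 z.2
      have hc' := (clS_eq_zero _ _).1 ((key z (hk z.1 hz)).symm.trans hc)
      exact (clS_eq_zero _ _).2 (hinj _ hz hc')
    exact this
  · intro c
    obtain ⟨y, rfl⟩ := clS_surj _ c
    obtain ⟨x, hx, h⟩ := hsurj y.1 ((mem_ker_sc D n y.1).1 y.2)
    refine ⟨clS (C.sc n) ⟨x, (mem_ker_sc C n x).2 hx⟩, ?_⟩
    have h1 := key ⟨x, (mem_ker_sc C n x).2 hx⟩ (hk x hx)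
    exact h1.trans ((clS_eq_iff _ _ _).2 h)

end ModHomology
/-! ### Inhomogeneous cochains versus list cochains -/

section Inhom

variable {G : Type} [Group G]

theorem dL_ofFn {X : Type} (n : ℕ) (x : Fin (n + 1) → X) (F : List X → ℚ) :
    dL X F (List.ofFn x) =
      ∑ i : Fin (n + 1), (-1 : ℚ) ^ (i : ℕ) * F (List.ofFn (fun j : Fin n => x (i.succAbove j))) := by
  induction n generalizing F with
  | zero => simp [dL_cons, dL_nil]
  | succ n ih =>
    rw [Fin.sum_univ_succ, List.ofFn_succ, dL_cons, ih (fun i => x i.succ)]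
    simp only [Fin.val_zero, pow_zero, one_mul, Fin.succAbove_zero, Fin.val_succ, pow_succ,
      mul_neg, mul_one, neg_mul, Finset.sum_neg_distrib, sub_eq_add_neg]
    refine congrArg₂ (· + ·) rfl (congrArg Neg.neg ?_)
    refine Finset.sum_congr rfl fun i _ => ?_
    rw [List.ofFn_succ (f := fun j : Fin (n + 1) => x (i.succ.succAbove j))]
    simp [Fin.succ_succAbove_succ]

/-- to inhomogeneous cochains -/
def toInh (n : ℕ) : (List G → ℚ) →ₗ[ℚ] ((Fin n → G) → ℚ) where
  toFun F g := F (List.ofFn (Fin.partialProd g))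
  map_add' _ _ := rfl
  map_smul' _ _ := rfl

theorem toInh_apply (n : ℕ) (F : List G → ℚ) (g : Fin n → G) :
    toInh n F g = F (List.ofFn (Fin.partialProd g)) := rfl

theorem toInh_d (n : ℕ) {F : List G → ℚ} (hF : F ∈ InvL (⊤ : Subgroup G)) :
    toInh (n + 1) (dL G F) =
      (inhomogeneousCochains.d (Rep.trivial ℚ G ℚ) n).hom (toInh n F) := by
  funext g
  rw [inhomogeneousCochains.d_hom_apply, toInh_apply, dL_ofFn, Fin.sum_univ_succ]
  have h1 : (List.ofFn fun j : Fin (n + 1) => Fin.partialProd g ((0 : Fin (n + 2)).succAbove j)) =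
      (List.ofFn (Fin.partialProd fun i : Fin n => g i.succ)).map (g 0 * ·) := by
    rw [List.map_ofFn]
    congr 1
    funext j
    rw [Fin.succAbove_zero, Fin.partialProd_succ']
    rfl
  rw [h1, hF.2 _ (Subgroup.mem_top _)]
  refine congrArg₂ (· + ·) ?_ ?_
  · simp [toInh_apply]
  · refine Finset.sum_congr rfl fun i _ => ?_
    rw [toInh_apply, Fin.partialProd_contractNth]
    rfl

/-- from inhomogeneous cochains -/
def fromInh (n : ℕ) (f : (Fin n → G) → ℚ) : List G → ℚ := fun l =>
  if h : l.length = n + 1 then f (fun i => (l[i.1]'(by omega))⁻¹ * l[i.1 + 1]'(by omega)) else 0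

theorem fromInh_mem (n : ℕ) (f : (Fin n → G) → ℚ) : fromInh n f ∈ InvL (⊤ : Subgroup G) := by
  refine ⟨by simp [fromInh], fun k _ l => ?_⟩
  by_cases h : l.length = n + 1
  · have h' : (l.map (k * ·)).length = n + 1 := by simpa using h
    simp only [fromInh, dif_pos h, dif_pos h']
    congr 1
    funext i
    simp [mul_assoc]
  · have h' : ¬ (l.map (k * ·)).length = n + 1 := by simpa using h
    simp only [fromInh, dif_neg h, dif_neg h']

theorem fromInh_supp (n : ℕ) (f : (Fin n → G) → ℚ) (l : List G) (h : l.length ≠ n + 1) :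
    fromInh n f l = 0 := by
  simp only [fromInh, dif_neg h]

theorem toInh_fromInh (n : ℕ) (f : (Fin n → G) → ℚ) : toInh n (fromInh n f) = f := by
  funext g
  rw [toInh_apply, fromInh, dif_pos (by simp)]
  congr 1
  funext i
  have := Fin.partialProd_right_inv g i
  rw [List.getElem_ofFn, List.getElem_ofFn]
  exact this

theorem eq_of_toInh (n : ℕ) {F F' : List G → ℚ} (hF : F ∈ InvL (⊤ : Subgroup G))
    (hF' : F' ∈ InvL (⊤ : Subgroup G)) (h : toInh n F = toInh n F') (l : List G)
    (hl : l.length = n + 1) : F l = F' l := by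
  obtain ⟨x, rfl⟩ : ∃ x : Fin (n + 1) → G, l = List.ofFn x := by
    refine ⟨fun i => l[i.1]'(by omega), ?_⟩
    apply List.ext_getElem
    · rw [List.length_ofFn, hl]
    · intro i h1 h2
      rw [List.getElem_ofFn]
  have hx := Fin.partialProd_left_inv x
  have h1 : List.ofFn x = (List.ofFn (Fin.partialProd
      fun i : Fin n => (x i.castSucc)⁻¹ * x i.succ)).map (x 0 * ·) := by
    rw [List.map_ofFn]
    congr 1
    exact hx.symm
  rw [h1, hF.2 _ (Subgroup.mem_top _), hF'.2 _ (Subgroup.mem_top _)]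
  exact congrFun h _

theorem dL_fromInh_closed (n : ℕ) (f : (Fin n → G) → ℚ)
    (h : (inhomogeneousCochains.d (Rep.trivial ℚ G ℚ) n).hom f = 0) :
    dL G (fromInh n f) = 0 := by
  funext l
  by_cases hl : l.length = n + 2
  · refine eq_of_toInh (n + 1) (dL_mem_InvL (fromInh_mem n f)) (Submodule.zero_mem _) ?_ l hl
    rw [toInh_d n (fromInh_mem n f), toInh_fromInh, map_zero]
    exact h
  · cases l with
    | nil => rfl
    | cons x l =>
      simp only [List.length_cons] at hl
      exact dL_supp' l.length _ (fun l' hl' => fromInh_supp n f l' (by omega)) _ (by simp)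

theorem toInh_zero_dL {F : List G → ℚ} (hF : F ∈ InvL (⊤ : Subgroup G)) :
    toInh 0 (dL G F) = 0 := by
  funext g
  rw [toInh_apply]
  simp [dL_cons, dL_nil, hF.1]

/-- boundaries of the inhomogeneous complex -/
theorem range_iff (n : ℕ) (f : (Fin n → G) → ℚ) :
    (f ∈ LinearMap.range ((inhomogeneousCochains (Rep.trivial ℚ G ℚ)).sc n).f.hom) ↔
    ∃ F ∈ InvL (⊤ : Subgroup G), f = toInh n (dL G F) := by
  cases n with
  | zero =>
    refine (mem_range_sc_zero (inhomogeneousCochains (Rep.trivial ℚ G ℚ)) f).trans ?_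
    constructor
    · intro h
      refine ⟨0, Submodule.zero_mem _, ?_⟩
      rw [map_zero, map_zero]
      exact h
    · rintro ⟨F, hF, rfl⟩
      exact toInh_zero_dL hF
  | succ n =>
    refine (mem_range_sc_succ (inhomogeneousCochains (Rep.trivial ℚ G ℚ)) n f).trans ?_
    rw [inhomogeneousCochains.d_def]
    constructor
    · rintro ⟨y, rfl⟩
      refine ⟨fromInh n y, fromInh_mem n y, ?_⟩
      rw [toInh_d n (fromInh_mem n y), toInh_fromInh]
    · rintro ⟨F, hF, rfl⟩
      exact ⟨toInh n F, (toInh_d n hF).symm⟩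

theorem cox_isIso (cs : CoxeterSystem M W) (φ : G →* W) (hφ : Function.Surjective φ)
    (hc : ∀ k ∈ φ.ker, ∀ x, k * x = x * k) (n : ℕ) :
    CategoryTheory.IsIso (HomologicalComplex.homologyMap (cochainsRes φ.ker.subtype) n) := by
  have hres : ∀ F : List G → ℚ, (fun g : Fin n → φ.ker => toInh n F (fun i => (g i).1)) =
      toInh n (pullL (Subtype.val : φ.ker → G) F) := by
    intro F
    funext g
    rw [toInh_apply, toInh_apply, pullL_apply, List.map_ofFn]
    congr 2
    funext i
    induction i using Fin.induction with
    | zero => simp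
    | succ i ih =>
      rw [Fin.partialProd_succ, ih]
      simp [Fin.partialProd_succ]
  apply isIso_of_elem
  · intro f hf hb
    rw [inhomogeneousCochains.d_def] at hf
    obtain ⟨u, hu, hu'⟩ := (range_iff n _).1 hb
    have hz := dL_fromInh_closed n f hf
    have hu2 : (fun g : Fin n → φ.ker => f (fun i => (g i).1)) = toInh n (dL _ u) := hu'
    have h1 : pullL (Subtype.val : φ.ker → G) (fromInh n f) = dL _ (trunc n u) := by
      have hm : pullL (Subtype.val : φ.ker → G) (fromInh n f) ∈ InvL (⊤ : Subgroup φ.ker) :=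
        res_mem _ (InvL_mono le_top (fromInh_mem n f))
      rw [dL_trunc]
      funext l
      by_cases hl : l.length = n + 1
      · simp only [trunc, if_pos hl]
        refine eq_of_toInh n hm (dL_mem_InvL hu) ?_ l hl
        rw [← hres, toInh_fromInh, hu2]
      · simp only [trunc, if_neg hl]
        exact fromInh_supp n f _ (by simpa using hl)
    have htr : trunc n u ∈ InvL (⊤ : Subgroup φ.ker) := by
      refine ⟨by simp [trunc, hu.1], fun k hk l => ?_⟩
      simp only [trunc, List.length_map, hu.2 k hk]
    obtain ⟨y, hy, hy'⟩ := cox_inj cs φ hφ hc _ (fromInh_mem n f) hz _ htr h1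
    refine (range_iff n _).2 ⟨y, hy, ?_⟩
    rw [← hy', toInh_fromInh]
  · intro f hf
    rw [inhomogeneousCochains.d_def] at hf
    have hz := dL_fromInh_closed n f hf
    obtain ⟨x, hx, hdx, u, hu, h⟩ := cox_surj cs φ hφ hc _ (fromInh_mem n f) hz
    refine ⟨toInh n x, ?_, (range_iff n _).2 ⟨u, hu, ?_⟩⟩
    · rw [inhomogeneousCochains.d_def]
      refine (toInh_d n hx).symm.trans ?_
      rw [hdx, map_zero]
    · rw [← h, map_sub, ← hres, toInh_fromInh]
      rfl

end Inhom
/-! ### Ranks of subquotients -/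

section Ranks

variable {X Y : Type} [AddCommGroup X] [Module ℚ X] [AddCommGroup Y] [Module ℚ Y]

/-- rank of a subquotient -/
noncomputable def hq (Z P : Submodule ℚ X) : Cardinal := Module.rank ℚ (↥Z ⧸ P.submoduleOf Z)

theorem rank_eq_of_surj (Z P : Submodule ℚ X) (g : ↥Z →ₗ[ℚ] Y) (hg : Function.Surjective g)
    (h : ∀ x : Z, g x = 0 ↔ x.1 ∈ P) : hq Z P = Module.rank ℚ Y := by
  have : LinearMap.ker g = P.submoduleOf Z := by
    ext x
    rw [LinearMap.mem_ker, h]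
    rfl
  rw [hq, ← this]
  exact (g.quotKerEquivOfSurjective hg).rank_eq

theorem hq_eq (Z P : Submodule ℚ X) (Z' P' : Submodule ℚ Y) (g : X →ₗ[ℚ] Y)
    (hZ : ∀ x ∈ Z, g x ∈ Z') (h1 : ∀ x ∈ Z, g x ∈ P' ↔ x ∈ P)
    (h2 : ∀ y ∈ Z', ∃ x ∈ Z, g x - y ∈ P') : hq Z P = hq Z' P' := by
  refine rank_eq_of_surj Z P ((P'.submoduleOf Z').mkQ ∘ₗ g.restrict hZ) ?_ ?_
  · intro c
    obtain ⟨y, rfl⟩ := Submodule.mkQ_surjective _ c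
    obtain ⟨x, hx, h⟩ := h2 y.1 y.2
    refine ⟨⟨x, hx⟩, ?_⟩
    rw [LinearMap.comp_apply, ← sub_eq_zero, ← map_sub, Submodule.mkQ_apply,
      Submodule.Quotient.mk_eq_zero]
    exact h
  · intro x
    rw [LinearMap.comp_apply, Submodule.mkQ_apply, Submodule.Quotient.mk_eq_zero, ← h1 x.1 x.2]
    rfl

theorem hq_tower (Z P R : Submodule ℚ X) (h1 : R ≤ P) (h2 : P ≤ Z) :
    hq Z R = hq Z P + hq P R := by
  have hle : R.submoduleOf Z ≤ P.submoduleOf Z := fun x hx => h1 hx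
  have e1 := (Submodule.quotientQuotientEquivQuotient _ _ hle).rank_eq
  have e2 := Submodule.rank_quotient_add_rank ((P.submoduleOf Z).map (R.submoduleOf Z).mkQ)
  have e3 : hq P R = Module.rank ℚ ↥((P.submoduleOf Z).map (R.submoduleOf Z).mkQ) := by
    let g : ↥P →ₗ[ℚ] ↥((P.submoduleOf Z).map (R.submoduleOf Z).mkQ) :=
      LinearMap.codRestrict _ ((R.submoduleOf Z).mkQ ∘ₗ Submodule.inclusion h2)
        (fun x => ⟨Submodule.inclusion h2 x, x.2, rfl⟩)
    refine rank_eq_of_surj P R g ?_ ?_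
    · rintro ⟨_, ⟨x, hx, rfl⟩⟩
      exact ⟨⟨x.1, hx⟩, rfl⟩
    · intro x
      rw [← Subtype.coe_inj]
      exact Submodule.Quotient.mk_eq_zero _
  rw [hq, ← e2, e1, e3]
  rfl

theorem hq_ses (d N : X →ₗ[ℚ] X) (hdN : ∀ x, d (N x) = N (d x)) (hdd : ∀ x, d (d x) = 0)
    (E0 E1 E2 : Submodule ℚ X) (hd0 : ∀ x ∈ E0, d x ∈ E1) (hd1 : ∀ x ∈ E1, d x ∈ E2)
    (hN1 : ∀ x ∈ E1, N x ∈ E1)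
    (hs0 : ∀ x ∈ E0, ∃ y ∈ E0, N y = x) (hs1 : ∀ x ∈ E1, ∃ y ∈ E1, N y = x)
    (ht1 : ∀ x ∈ E1, d x = 0 → ∃ y ∈ E0, N x = d y)
    (ht2 : ∀ x ∈ E2, d x = 0 → ∃ y ∈ E1, N x = d y) :
    hq ((E2 ⊓ LinearMap.ker N) ⊓ LinearMap.ker d) ((E1 ⊓ LinearMap.ker N).map d) =
      hq (E2 ⊓ LinearMap.ker d) (E1.map d) + hq (E1 ⊓ LinearMap.ker d) (E0.map d) := by
  rw [hq_tower _ ((E2 ⊓ LinearMap.ker N) ⊓ E1.map d)]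
  · congr 1
    · refine hq_eq _ _ _ _ LinearMap.id ?_ ?_ ?_
      · rintro x ⟨⟨h1, h2⟩, h3⟩; exact ⟨h1, h3⟩
      · rintro x ⟨h1, h2⟩
        exact ⟨fun h => ⟨h1, h⟩, fun h => h.2⟩
      · rintro z ⟨hz, hz'⟩
        obtain ⟨u, hu, h⟩ := ht2 z hz hz'
        obtain ⟨y, hy, rfl⟩ := hs1 u hu
        refine ⟨z - d y, ⟨⟨Submodule.sub_mem _ hz (hd1 y hy), ?_⟩, ?_⟩, -y,
          Submodule.neg_mem _ hy, by simp⟩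
        · rw [SetLike.mem_coe, LinearMap.mem_ker, map_sub, h, hdN, sub_self]
        · rw [SetLike.mem_coe, LinearMap.mem_ker] at hz' ⊢
          rw [map_sub, hz', hdd, sub_self]
    · have e1 : hq (E1 ⊓ LinearMap.ker (N ∘ₗ d)) (E1 ⊓ ((E1 ⊓ LinearMap.ker N).map d).comap d) =
          hq ((E2 ⊓ LinearMap.ker N) ⊓ E1.map d) ((E1 ⊓ LinearMap.ker N).map d) := by
        refine hq_eq _ _ _ _ d ?_ ?_ ?_
        · rintro x ⟨hx, hx'⟩
          exact ⟨⟨hd1 x hx, hx'⟩, x, hx, rfl⟩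
        · rintro x ⟨hx, hx'⟩
          exact ⟨fun h => ⟨hx, h⟩, fun h => h.2⟩
        · rintro _ ⟨⟨h1, h2⟩, x, hx, rfl⟩
          exact ⟨x, ⟨hx, h2⟩, by rw [sub_self]; exact Submodule.zero_mem _⟩
      have e2 : hq (E1 ⊓ LinearMap.ker (N ∘ₗ d)) (E1 ⊓ ((E1 ⊓ LinearMap.ker N).map d).comap d) =
          hq (E1 ⊓ LinearMap.ker d) (E0.map d) := by
        refine hq_eq _ _ _ _ N ?_ ?_ ?_
        · rintro x ⟨hx, hx'⟩
          refine ⟨hN1 x hx, ?_⟩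
          rw [SetLike.mem_coe, LinearMap.mem_ker, hdN]
          exact hx'
        · rintro x ⟨hx, hx'⟩
          constructor
          · rintro ⟨u, hu, h⟩
            obtain ⟨v, hv, rfl⟩ := hs0 u hu
            refine ⟨hx, x - d v, ⟨Submodule.sub_mem _ hx (hd0 v hv), ?_⟩, ?_⟩
            · rw [SetLike.mem_coe, LinearMap.mem_ker, map_sub, ← hdN, h, sub_self]
            · rw [map_sub, hdd, sub_zero]
          · rintro ⟨_, i, ⟨hi, hi'⟩, h⟩
            obtain ⟨y, hy, h'⟩ := ht1 (x - i) (Submodule.sub_mem _ hx hi)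
              (by rw [map_sub, h, sub_self])
            refine ⟨y, hy, ?_⟩
            rw [SetLike.mem_coe, LinearMap.mem_ker] at hi'
            rw [← h', map_sub, hi', sub_zero]
        · rintro z ⟨hz, hz'⟩
          obtain ⟨y, hy, rfl⟩ := hs1 z hz
          refine ⟨y, ⟨hy, ?_⟩, by rw [sub_self]; exact Submodule.zero_mem _⟩
          rw [SetLike.mem_coe, LinearMap.mem_ker, LinearMap.comp_apply, ← hdN]
          exact hz'
      rw [← e1, e2]
  · rintro _ ⟨x, ⟨hx, hx'⟩, rfl⟩
    rw [SetLike.mem_coe, LinearMap.mem_ker] at hx'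
    refine ⟨⟨hd1 x hx, ?_⟩, x, hx, rfl⟩
    rw [SetLike.mem_coe, LinearMap.mem_ker, ← hdN, hx', map_zero]
  · rintro _ ⟨h1, x, hx, rfl⟩
    exact ⟨h1, hdd x⟩

end Ranks
/-! ### Dimension count for free abelian groups -/

section DimCount

variable {G : Type} [Group G]

/-- homogeneous invariant cochains -/
def EL (K : Subgroup G) (m : ℕ) : Submodule ℚ (List G → ℚ) where
  carrier := {f | f ∈ InvL K ∧ ∀ l, l.length ≠ m → f l = 0}
  add_mem' := by
    rintro a b ⟨ha, ha'⟩ ⟨hb, hb'⟩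
    refine ⟨Submodule.add_mem _ ha hb, fun l hl => ?_⟩
    rw [Pi.add_apply, ha' l hl, hb' l hl, add_zero]
  zero_mem' := ⟨Submodule.zero_mem _, fun _ _ => rfl⟩
  smul_mem' := by
    rintro c a ⟨ha, ha'⟩
    refine ⟨Submodule.smul_mem _ c ha, fun l hl => ?_⟩
    rw [Pi.smul_apply, ha' l hl, smul_zero]

theorem mem_EL {K : Subgroup G} {m : ℕ} {f : List G → ℚ} :
    f ∈ EL K m ↔ f ∈ InvL K ∧ ∀ l, l.length ≠ m → f l = 0 := Iff.rfl

theorem EL_zero {K : Subgroup G} {f : List G → ℚ} (hf : f ∈ EL K 0) : f = 0 := by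
  funext l
  by_cases h : l.length = 0
  · have : l = [] := by simpa using h
    rw [this]; exact hf.1.1
  · exact hf.2 l h

theorem dL_mem_EL {K : Subgroup G} {m : ℕ} {f : List G → ℚ} (hf : f ∈ EL K m) :
    dL G f ∈ EL K (m + 1) := by
  refine ⟨dL_mem_InvL hf.1, fun l hl => ?_⟩
  cases l with
  | nil => rfl
  | cons x l =>
    simp only [List.length_cons] at hl
    exact dL_supp' l.length _ (fun l' hl' => hf.2 l' (by omega)) _ (by simp)

theorem lH_supp {X : Type} (r : X → X) (a : ℕ) (f : List X → ℚ)
    (hf : ∀ l, l.length ≠ a → f l = 0) (l : List X) (hl : l.length + 1 ≠ a) : lH r f l = 0 := by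
  induction l generalizing a f with
  | nil => rfl
  | cons x l ih =>
    simp only [List.length_cons] at hl
    rw [lH_cons, ih (a - 1), hf, sub_zero]
    · simpa using hl
    · intro l' hl'
      apply hf
      simp only [List.length_cons]
      omega
    · omega

/-- rank of the cohomology -/
noncomputable def hL (K : Subgroup G) (m : ℕ) : Cardinal :=
  hq (EL K (m + 1) ⊓ LinearMap.ker (dL G)) ((EL K m).map (dL G))

theorem hL_res {Q : Type} [Group Q] (φ : G →* Q) (m : ℕ) :
    hL φ.ker m = hL (⊤ : Subgroup φ.ker) m := by
  obtain ⟨r, hr, hr'⟩ := exists_retr φ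
  have hres : ∀ n, ∀ f ∈ EL φ.ker n, pullL (Subtype.val : φ.ker → G) f ∈
      EL (⊤ : Subgroup φ.ker) n := by
    intro n f hf
    exact ⟨res_mem _ hf.1, fun l hl => hf.2 _ (by rwa [List.length_map])⟩
  have hext : ∀ n, ∀ f ∈ EL (⊤ : Subgroup φ.ker) n, pullL r f ∈ EL φ.ker n := by
    intro n f hf
    exact ⟨ext_mem _ r hr hf.1, fun l hl => hf.2 _ (by rwa [List.length_map])⟩
  refine hq_eq _ _ _ _ (pullL (Subtype.val : φ.ker → G)) ?_ ?_ ?_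
  · rintro x ⟨hx, hx'⟩
    rw [SetLike.mem_coe, LinearMap.mem_ker] at hx'
    refine ⟨hres _ x hx, ?_⟩
    rw [SetLike.mem_coe, LinearMap.mem_ker, dL_pullL, hx', map_zero]
  · rintro x ⟨hx, hx'⟩
    rw [SetLike.mem_coe, LinearMap.mem_ker] at hx'
    constructor
    · rintro ⟨u, hu, h⟩
      have h1 := ext_res_closed φ.ker r x hx'
      rw [← h, ← dL_pullL] at h1
      refine ⟨pullL r u - lH (fun x => (r x).1) x, Submodule.sub_mem _ (hext _ u hu)
        ⟨lH_r_mem _ r hr hx.1, fun l hl => lH_supp _ (m + 1) x hx.2 l (by omega)⟩, ?_⟩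
      rw [map_sub, ← h1]
      simp
    · rintro ⟨y, hy, rfl⟩
      exact ⟨_, hres _ y hy, dL_pullL _ _⟩
  · rintro z ⟨hz, hz'⟩
    rw [SetLike.mem_coe, LinearMap.mem_ker] at hz'
    refine ⟨pullL r z, ⟨hext _ z hz, ?_⟩, ?_⟩
    · rw [SetLike.mem_coe, LinearMap.mem_ker, dL_pullL, hz', map_zero]
    · rw [res_ext _ r hr', sub_self]
      exact Submodule.zero_mem _

/-- discrete antiderivative -/
noncomputable def sumZ (a : ℤ → ℚ) (n : ℤ) : ℚ :=
  ∑ i ∈ Finset.Ico 0 n, a i - ∑ i ∈ Finset.Ico n 0, a i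

theorem sumZ_succ (a : ℤ → ℚ) (n : ℤ) : sumZ a (n + 1) = sumZ a n + a n := by
  unfold sumZ
  rcases le_or_gt 0 n with h | h
  · have h1 : Finset.Ico 0 (n + 1) = insert n (Finset.Ico 0 n) := by
      ext i; simp; omega
    have h2 : Finset.Ico (n + 1) 0 = ∅ := by ext i; simp; omega
    have h3 : Finset.Ico n 0 = ∅ := by ext i; simp; omega
    rw [h1, h2, h3, Finset.sum_insert (by simp)]
    simp; ring
  · have h1 : Finset.Ico n 0 = insert n (Finset.Ico (n + 1) 0) := by
      ext i; simp; omega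
    have h2 : Finset.Ico 0 (n + 1) = ∅ := by ext i; simp; omega
    have h3 : Finset.Ico 0 n = ∅ := by ext i; simp; omega
    rw [h1, h2, h3, Finset.sum_insert (by simp)]
    simp

theorem diff_surj (χ : G →* Multiplicative ℤ) (hG : ∀ x y : G, x * y = y * x)
    (t : G) (ht : χ t = Multiplicative.ofAdd 1) (m : ℕ) (f : List G → ℚ) (hf : f ∈ EL χ.ker m) :
    ∃ y ∈ EL χ.ker m, (pullL (t * ·) - LinearMap.id : (List G → ℚ) →ₗ[ℚ] (List G → ℚ)) y = f := by
  let y : List G → ℚ := fun l => match l with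
    | [] => 0
    | x :: u => sumZ (fun i => f ((x :: u).map (t ^ (i - (χ x).toAdd) * ·))) (χ x).toAdd
  have hy : ∀ x u, y (x :: u) =
    sumZ (fun i => f ((x :: u).map (t ^ (i - (χ x).toAdd) * ·))) (χ x).toAdd := fun _ _ => rfl
  refine ⟨y, ⟨⟨rfl, ?_⟩, ?_⟩, ?_⟩
  · rintro k hk (_ | ⟨x, u⟩)
    · rfl
    · have hk' : χ k = 1 := hk
      rw [List.map_cons, hy, hy, map_mul, hk', one_mul]
      congr 1
      funext i
      rw [← List.map_cons (f := fun z => k * z), map_mul_mul, hG, ← map_mul_mul, hf.1.2 k hk]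
  · intro l hl
    cases l with
    | nil => rfl
    | cons x u =>
      rw [hy]
      have : (fun i => f ((x :: u).map (t ^ (i - (χ x).toAdd) * ·))) = fun _ => 0 := by
        funext i
        exact hf.2 _ (by rwa [List.length_map])
      rw [this]
      simp [sumZ]
  · funext l
    cases l with
    | nil =>
      simp [pullL_apply, hf.1.1]
    | cons x u =>
      show y ((x :: u).map (t * ·)) - y (x :: u) = f (x :: u)
      rw [List.map_cons, hy, hy, map_mul, ht, ← List.map_cons (f := fun z => t * z)]
      have h1 : (Multiplicative.ofAdd (1 : ℤ) * χ x).toAdd = (χ x).toAdd + 1 := by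
        rw [toAdd_mul, toAdd_ofAdd, add_comm]
      rw [h1, sumZ_succ]
      have h2 : ∀ i : ℤ, (((x :: u).map (t * ·)).map (t ^ (i - ((χ x).toAdd + 1)) * ·)) =
          (x :: u).map (t ^ (i - (χ x).toAdd) * ·) := by
        intro i
        rw [map_mul_mul, ← zpow_add_one]
        congr 4
        ring
      simp only [h2]
      simp

theorem hL_step (χ : G →* Multiplicative ℤ) (hG : ∀ x y : G, x * y = y * x)
    (t : G) (ht : χ t = Multiplicative.ofAdd 1) (m : ℕ) (E0 : Submodule ℚ (List G → ℚ))
    (hE0 : E0 = ⊥ ∧ m = 0 ∨ ∃ n, m = n + 1 ∧ E0 = EL χ.ker n) :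
    hL (⊤ : Subgroup G) m = hL χ.ker m +
      hq (EL χ.ker m ⊓ LinearMap.ker (dL G)) (E0.map (dL G)) := by
  set N : (List G → ℚ) →ₗ[ℚ] (List G → ℚ) := pullL (t * ·) - LinearMap.id with hN
  have hNa : ∀ f l, N f l = f (l.map (t * ·)) - f l := fun _ _ => rfl
  have hker : ∀ n, EL (⊤ : Subgroup G) n = EL χ.ker n ⊓ LinearMap.ker N := by
    intro n
    ext f
    constructor
    · intro hf
      refine ⟨⟨InvL_mono le_top hf.1, hf.2⟩, ?_⟩
      rw [SetLike.mem_coe, LinearMap.mem_ker]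
      funext l
      rw [hNa, hf.1.2 t trivial, sub_self]
      rfl
    · rintro ⟨hf, hf'⟩
      rw [SetLike.mem_coe, LinearMap.mem_ker] at hf'
      refine ⟨⟨hf.1.1, fun g _ => ?_⟩, hf.2⟩
      have ht' : t ∈ stabL f := by
        intro l
        have := congrFun hf' l
        rw [hNa] at this
        exact sub_eq_zero.1 this
      have hk : χ.ker ≤ stabL f := fun k hk => hf.1.2 k hk
      have : g = (g * (t ^ (χ g).toAdd)⁻¹) * t ^ (χ g).toAdd := by group
      have h2 : g ∈ stabL f := by
        rw [this]
        refine mul_mem (hk ?_) (zpow_mem ht' _)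
        rw [MonoidHom.mem_ker, map_mul, map_inv, map_zpow, ht, ← ofAdd_zsmul]
        simp
      exact h2
  have hdN : ∀ x, dL G (N x) = N (dL G x) := by
    intro x
    rw [hN, LinearMap.sub_apply, LinearMap.sub_apply, map_sub, dL_pullL]
    rfl
  have hNm : ∀ n, ∀ f ∈ EL χ.ker n, N f ∈ EL χ.ker n := by
    intro n f hf
    refine Submodule.sub_mem _ ⟨⟨hf.1.1, fun k hk l => ?_⟩, fun l hl => ?_⟩ hf
    · rw [pullL_apply, pullL_apply, map_mul_mul, hG, ← map_mul_mul, hf.1.2 k hk]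
    · exact hf.2 _ (by rwa [List.length_map])
  have hhom : ∀ n, ∀ f ∈ EL χ.ker (n + 1), dL G f = 0 → ∃ y ∈ EL χ.ker n, N f = dL G y := by
    intro n f hf hdf
    refine ⟨lH (t * ·) f, ⟨lH_mem_InvL hf.1 _ fun k _ x => ?_,
      fun l hl => lH_supp _ (n + 1) f hf.2 l (by omega)⟩, ?_⟩
    · rw [← mul_assoc, ← mul_assoc, hG k]
    · rw [← homotopy_of_closed _ f hdf]
      rfl
  have := hq_ses (dL G) N hdN dL_dL E0 (EL χ.ker m) (EL χ.ker (m + 1)) ?_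
    (fun x hx => dL_mem_EL hx) (hNm m) ?_ (fun x hx => diff_surj χ hG t ht m x hx) ?_ (hhom m)
  · rw [← hker, ← hker] at this
    exact this
  · rcases hE0 with ⟨rfl, rfl⟩ | ⟨n, rfl, rfl⟩
    · intro x hx
      rw [Submodule.mem_bot] at hx
      rw [hx, map_zero]
      exact Submodule.zero_mem _
    · exact fun x hx => dL_mem_EL hx
  · rcases hE0 with ⟨rfl, rfl⟩ | ⟨n, rfl, rfl⟩
    · intro x hx
      rw [Submodule.mem_bot] at hx
      exact ⟨0, Submodule.zero_mem _, by rw [hx, map_zero]⟩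
    · exact fun x hx => diff_surj χ hG t ht n x hx
  · rcases hE0 with ⟨rfl, rfl⟩ | ⟨n, rfl, rfl⟩
    · intro x hx _
      rw [EL_zero hx]
      exact ⟨0, Submodule.zero_mem _, by rw [map_zero, map_zero]⟩
    · exact hhom n

theorem hL_succ (χ : G →* Multiplicative ℤ) (hG : ∀ x y : G, x * y = y * x)
    (t : G) (ht : χ t = Multiplicative.ofAdd 1) (m : ℕ) :
    hL (⊤ : Subgroup G) (m + 1) = hL χ.ker (m + 1) + hL χ.ker m :=
  hL_step χ hG t ht (m + 1) (EL χ.ker m) (Or.inr ⟨m, rfl, rfl⟩)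

theorem hL_zero (χ : G →* Multiplicative ℤ) (hG : ∀ x y : G, x * y = y * x)
    (t : G) (ht : χ t = Multiplicative.ofAdd 1) :
    hL (⊤ : Subgroup G) 0 = hL χ.ker 0 := by
  rw [hL_step χ hG t ht 0 ⊥ (Or.inl ⟨rfl, rfl⟩)]
  have : hq (EL χ.ker 0 ⊓ LinearMap.ker (dL G)) ((⊥ : Submodule ℚ (List G → ℚ)).map (dL G)) = 0 := by
    rw [hq, rank_zero_iff]
    have : Subsingleton ↥(EL χ.ker 0 ⊓ LinearMap.ker (dL G)) := by
      refine ⟨fun a b => Subtype.ext ?_⟩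
      rw [EL_zero a.2.1, EL_zero b.2.1]
    infer_instance
  rw [this, add_zero]

theorem hL_base [Subsingleton G] (m : ℕ) : hL (⊤ : Subgroup G) m = (Nat.choose 0 m : ℕ) := by
  have hall : ∀ f : List G → ℚ, f [] = 0 → f ∈ InvL (⊤ : Subgroup G) := by
    intro f hf
    refine ⟨hf, fun k _ l => ?_⟩
    rw [Subsingleton.elim k 1, map_one_mul]
  cases m with
  | zero =>
    have : hL (⊤ : Subgroup G) 0 = Module.rank ℚ ℚ := by
      refine rank_eq_of_surj _ _ ((LinearMap.proj [1]) ∘ₗ Submodule.subtype _) ?_ ?_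
      · intro c
        let f : List G → ℚ := fun l => if l.length = 1 then c else 0
        refine ⟨⟨f, ⟨hall _ (by simp [f]), ?_⟩, ?_⟩, ?_⟩
        · intro l hl
          simp at hl
          simp [f, hl]
        · rw [SetLike.mem_coe, LinearMap.mem_ker]
          funext l
          rcases l with _ | ⟨x, _ | ⟨y, l⟩⟩
          · rfl
          · simp [dL_cons, dL_nil, f]
          · by_cases hl : l = []
            · subst hl
              simp [dL_cons, dL_nil, f]
            · have hl' : l.length ≠ 0 := by simpa using hl
              exact dL_supp' (l.length + 1) f (fun l' h => by simp [f, h, hl']) _ (by simp)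
        · simp [f]
      · intro x
        constructor
        · intro h
          have : x.1 = 0 := by
            funext l
            by_cases hl : l.length = 0 + 1
            · obtain ⟨a, rfl⟩ := List.length_eq_one_iff.1 hl
              rw [Subsingleton.elim a 1]
              exact h
            · exact x.2.1.2 l hl
          rw [this]
          exact Submodule.zero_mem _
        · rintro ⟨y, hy, h⟩
          rw [EL_zero hy, map_zero] at h
          show x.1 [1] = 0
          rw [← h]
          rfl
    rw [this]
    simp
  | succ m =>
    simp only [Nat.choose_zero_succ, Nat.cast_zero]
    rw [hL, hq, rank_zero_iff]
    refine Submodule.Quotient.subsingleton_iff.2 ?_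
    rw [eq_top_iff]
    rintro ⟨x, hx, hx'⟩ _
    rw [SetLike.mem_coe, LinearMap.mem_ker] at hx'
    refine ⟨fun l => x (1 :: l), ⟨hall _ (hx.2 _ (by simp)), fun l hl => hx.2 _ (by simpa using hl)⟩,
      ?_⟩
    funext l
    have := congrFun hx' (1 :: l)
    rw [dL_cons] at this
    exact (sub_eq_zero.1 this).symm

end DimCount

section DimCount2

variable {G : Type} [Group G]

theorem rank_coh (n : ℕ) :
    hL (⊤ : Subgroup G) n = Module.rank ℚ (groupCohomology (Rep.trivial ℚ G ℚ) n) := by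
  let S := (inhomogeneousCochains (Rep.trivial ℚ G ℚ)).sc n
  have hmem : ∀ x : ↥(EL (⊤ : Subgroup G) (n + 1) ⊓ LinearMap.ker (dL G)),
      (toInh n x.1 : (Fin n → G) → ℚ) ∈ LinearMap.ker S.g.hom := by
    intro x
    refine (mem_ker_sc _ n _).2 ?_
    rw [inhomogeneousCochains.d_def]
    refine (toInh_d n x.2.1.1).symm.trans ?_
    have : dL G x.1 = 0 := x.2.2
    rw [this, map_zero]
  let g0 : ↥(EL (⊤ : Subgroup G) (n + 1) ⊓ LinearMap.ker (dL G)) →ₗ[ℚ]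
      ↥(LinearMap.ker S.g.hom) :=
    { toFun := fun x => ⟨toInh n x.1, hmem x⟩
      map_add' := fun x y => Subtype.ext (map_add (toInh n) x.1 y.1)
      map_smul' := fun c x => Subtype.ext (map_smul (toInh n) c x.1) }
  refine rank_eq_of_surj _ _ ((clS S) ∘ₗ g0 : _ →ₗ[ℚ] S.homology) ?_ ?_
  · intro y
    obtain ⟨⟨f, hf⟩, rfl⟩ := clS_surj S y
    have hf2 := (mem_ker_sc _ n _).1 hf
    rw [inhomogeneousCochains.d_def] at hf2
    refine ⟨⟨fromInh n f, ⟨fromInh_mem n f, fun l hl => fromInh_supp n f l hl⟩,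
      dL_fromInh_closed n f hf2⟩, ?_⟩
    refine congrArg (clS S) (Subtype.ext ?_)
    exact toInh_fromInh n f
  · intro x
    refine (clS_eq_zero S (g0 x)).trans ?_
    refine (range_iff n _).trans ?_
    constructor
    · rintro ⟨F, hF, h⟩
      refine ⟨trunc n F, ⟨⟨by simp [trunc, hF.1], fun k hk l => ?_⟩, fun l hl => ?_⟩, ?_⟩
      · simp only [trunc, List.length_map, hF.2 k hk]
      · simp only [trunc, if_neg hl]
      · rw [dL_trunc]
        funext l
        by_cases hl : l.length = n + 1
        · simp only [trunc, if_pos hl]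
          exact (eq_of_toInh n x.2.1.1 (dL_mem_InvL hF) h l hl).symm
        · simp only [trunc, if_neg hl]
          exact (x.2.1.2 l hl).symm
    · rintro ⟨F, hF, h⟩
      exact ⟨F, hF.1, congrArg (toInh n) h.symm⟩

theorem hL_free (c : ℕ) : ∀ (G : Type) [Group G] (_ : G ≃* Multiplicative (Fin c → ℤ)) (n : ℕ),
    hL (⊤ : Subgroup G) n = ((c.choose n : ℕ) : Cardinal) := by
  induction c with
  | zero =>
    intro G _ e n
    haveI : Subsingleton G := ⟨fun a b => e.injective
      (Multiplicative.toAdd.injective (Subsingleton.elim _ _))⟩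
    exact hL_base n
  | succ c ih =>
    intro G _ e n
    have hG : ∀ x y : G, x * y = y * x := fun x y => e.injective (by
      rw [map_mul, map_mul, mul_comm])
    let χ : G →* Multiplicative ℤ :=
      (AddMonoidHom.toMultiplicative (Pi.evalAddMonoidHom (fun _ : Fin (c + 1) => ℤ) 0)).comp
        e.toMonoidHom
    have hχ : ∀ x, χ x = Multiplicative.ofAdd ((e x).toAdd 0) := fun x => rfl
    let t : G := e.symm (Multiplicative.ofAdd (Pi.single 0 1))
    have ht : χ t = Multiplicative.ofAdd 1 := by
      rw [hχ]
      simp [t]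
    let e' : χ.ker ≃* Multiplicative (Fin c → ℤ) :=
      { toFun := fun x => Multiplicative.ofAdd (fun i => (e x.1).toAdd i.succ)
        invFun := fun v => ⟨e.symm (Multiplicative.ofAdd (Fin.cons 0 v.toAdd)), by
          rw [MonoidHom.mem_ker, hχ]
          simp⟩
        left_inv := by
          rintro ⟨x, hx⟩
          rw [MonoidHom.mem_ker, hχ] at hx
          have hx0 : (e x).toAdd 0 = 0 := hx
          apply Subtype.ext
          show e.symm _ = x
          rw [MulEquiv.symm_apply_eq]
          apply Multiplicative.toAdd.injective
          funext i
          refine Fin.cases ?_ (fun i => ?_) i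
          · simp [hx0]
          · simp
        right_inv := by
          intro v
          simp
        map_mul' := by
          intro x y
          simp only [Subgroup.coe_mul, map_mul]
          rfl }
    cases n with
    | zero =>
      rw [hL_zero χ hG t ht, hL_res, ih _ e']
      simp
    | succ n =>
      rw [hL_succ χ hG t ht, hL_res, hL_res, ih _ e', ih _ e', Nat.choose_succ_succ]
      push_cast
      exact add_comm _ _

theorem finrank_coh_free (c : ℕ) (e : G ≃* Multiplicative (Fin c → ℤ)) (n : ℕ) :
    Module.finrank ℚ (groupCohomology (Rep.trivial ℚ G ℚ) n) = c.choose n := by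
  rw [Module.finrank, ← rank_coh, hL_free c G e]
  simp

theorem finrank_coh_of_isIso {H : Type} [Group H] (f : H →* G) (n : ℕ)
    (h : CategoryTheory.IsIso (HomologicalComplex.homologyMap (cochainsRes f) n)) :
    Module.finrank ℚ (groupCohomology (Rep.trivial ℚ G ℚ) n) =
      Module.finrank ℚ (groupCohomology (Rep.trivial ℚ H ℚ) n) :=
  (CategoryTheory.Iso.toLinearEquiv (CategoryTheory.asIso
    (HomologicalComplex.homologyMap (cochainsRes f) n))).finrank_eq

end DimCount2

/-! ### Structure of the adjoint group -/

section AdGroup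

/-- conjugation of a reflection -/
def cjR (cs : CoxeterSystem M W) (w : W) (x : CoxeterQuandle cs) : CoxeterQuandle cs :=
  ⟨w * x.1 * w⁻¹, x.2.conj w⟩

theorem cjR_val (cs : CoxeterSystem M W) (w : W) (x : CoxeterQuandle cs) :
    (cjR cs w x).1 = w * x.1 * w⁻¹ := rfl

theorem cjR_one (cs : CoxeterSystem M W) (x : CoxeterQuandle cs) : cjR cs 1 x = x :=
  Subtype.ext (by simp [cjR_val])

theorem cjR_mul (cs : CoxeterSystem M W) (v w : W) (x : CoxeterQuandle cs) :
    cjR cs (v * w) x = cjR cs v (cjR cs w x) :=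
  Subtype.ext (by simp [cjR_val, mul_assoc])

/-- the simple reflection as an element of the quandle -/
def simR (cs : CoxeterSystem M W) (i : B) : CoxeterQuandle cs :=
  ⟨cs.simple i, cs.isReflection_simple i⟩

theorem coxE_conj (cs : CoxeterSystem M W) (x y : CoxeterQuandle cs) :
    coxE cs x * coxE cs y * (coxE cs x)⁻¹ = coxE cs (cjR cs x.1 y) :=
  ((Rack.toEnvelGroup (CoxeterQuandle cs)).map_act (x := x) (y := y)).symm

theorem coxE_induction (cs : CoxeterSystem M W) {p : EnvelGroup (CoxeterQuandle cs) → Prop}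
    (h1 : p 1) (he : ∀ x, p (coxE cs x)) (hm : ∀ a b, p a → p b → p (a * b))
    (hi : ∀ a, p a → p a⁻¹) (g : EnvelGroup (CoxeterQuandle cs)) : p g := by
  induction g using Quotient.inductionOn with
  | h a =>
    induction a with
    | unit => exact h1
    | incl x => exact he x
    | mul a b ha hb => exact hm _ _ ha hb
    | inv a ha => exact hi _ ha

variable (cs : CoxeterSystem M W) (φ : EnvelGroup (CoxeterQuandle cs) →* W)

theorem ad_conj_gen
    (hφ : ∀ x : CoxeterQuandle cs, φ (coxE cs x) = x.1)
    (g : EnvelGroup (CoxeterQuandle cs)) :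
    ∀ y, g * coxE cs y * g⁻¹ = coxE cs (cjR cs (φ g) y) := by
  induction g using coxE_induction cs with
  | h1 => intro y; simp [cjR_one]
  | he x => intro y; rw [hφ, coxE_conj]
  | hm a b ha hb =>
    intro y
    rw [map_mul, cjR_mul, ← ha, ← hb]
    group
  | hi a ha =>
    intro y
    have := ha (cjR cs (φ a)⁻¹ y)
    rw [← cjR_mul, mul_inv_cancel, cjR_one] at this
    rw [map_inv, ← this]
    group

theorem ad_ker_central
    (hφ : ∀ x : CoxeterQuandle cs, φ (coxE cs x) = x.1)
    (k : EnvelGroup (CoxeterQuandle cs)) (hk : k ∈ φ.ker)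
    (x : EnvelGroup (CoxeterQuandle cs)) : k * x = x * k := by
  rw [MonoidHom.mem_ker] at hk
  induction x using coxE_induction cs with
  | h1 => simp
  | he x =>
    have := ad_conj_gen cs φ hφ k x
    rw [hk, cjR_one] at this
    exact mul_inv_eq_iff_eq_mul.1 this
  | hm a b ha hb => rw [← mul_assoc, ha, mul_assoc, hb, mul_assoc]
  | hi a ha => exact (Commute.inv_right (show Commute k a from ha)).eq

theorem ad_surj
    (hφ : ∀ x : CoxeterQuandle cs, φ (coxE cs x) = x.1)
    : Function.Surjective φ := by
  rw [← MonoidHom.range_eq_top, eq_top_iff, ← cs.subgroup_closure_range_simple,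
    Subgroup.closure_le]
  rintro _ ⟨i, rfl⟩
  exact ⟨coxE cs (simR cs i), hφ _⟩

theorem ad_sq_mem
    (hφ : ∀ x : CoxeterQuandle cs, φ (coxE cs x) = x.1)
    (x : CoxeterQuandle cs) : coxE cs x * coxE cs x ∈ φ.ker := by
  rw [MonoidHom.mem_ker, map_mul, hφ, x.2.mul_self]

theorem ad_sq_conj
    (hφ : ∀ x : CoxeterQuandle cs, φ (coxE cs x) = x.1)
    (w : W) (x : CoxeterQuandle cs) :
    coxE cs (cjR cs w x) * coxE cs (cjR cs w x) = coxE cs x * coxE cs x := by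
  obtain ⟨g, rfl⟩ := ad_surj cs φ hφ w
  rw [← ad_conj_gen cs φ hφ]
  have := ad_ker_central cs φ hφ _ (ad_sq_mem cs φ hφ x) g
  calc g * coxE cs x * g⁻¹ * (g * coxE cs x * g⁻¹)
      = g * (coxE cs x * coxE cs x) * g⁻¹ := by group
    _ = _ := by rw [← this]; group

/-- an abstract version of the presentation argument -/
theorem ad_ker_le
    (hφ : ∀ x : CoxeterQuandle cs, φ (coxE cs x) = x.1)
    (N : Subgroup (EnvelGroup (CoxeterQuandle cs))) [N.Normal]
    (hN : ∀ x, coxE cs x * coxE cs x ∈ N) : φ.ker ≤ N := by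
  let p := QuotientGroup.mk' N
  have hsq : ∀ x, p (coxE cs x) * p (coxE cs x) = 1 := fun x => by
    rw [← map_mul]
    exact (QuotientGroup.eq_one_iff _).2 (hN x)
  have hlift : M.IsLiftable (fun i => p (coxE cs (simR cs i))) := by
    intro i j
    set s := cs.simple i with hs
    set t := cs.simple j with ht
    set a := coxE cs (simR cs i)
    set b := coxE cs (simR cs j)
    have hst : (s * t) ^ M i j = 1 := cs.simple_mul_simple_pow i j
    have hsφ : φ a = s := hφ _
    have htφ : φ b = t := hφ _
    -- dihedral identities
    have dih : ∀ {H : Type} [Group H] (a b : H) (_ : a * a = 1) (_ : b * b = 1) (k : ℕ),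
        (a * b) ^ k * b * ((a * b) ^ k)⁻¹ = (a * b) ^ (2 * k) * b := by
      intro H _ a b ha hb k
      have h := conj_pow_aux a b ha hb k
      have h2 : b * ((a * b) ^ k)⁻¹ = (a * b) ^ k * b := by
        rw [mul_inv_eq_iff_eq_mul, mul_assoc, ← h, mul_inv_cancel_left]
      rw [mul_assoc, h2, ← mul_assoc, two_mul, pow_add]
    have hss : s * s = 1 := cs.simple_mul_simple_self i
    have htt : t * t = 1 := cs.simple_mul_simple_self j
    have haa := hsq (simR cs i)
    have hbb := hsq (simR cs j)
    have dih' : ∀ {H : Type} [Group H] (a b : H) (_ : a * a = 1) (_ : b * b = 1) (k : ℕ),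
        (a * b) ^ k * a * ((a * b) ^ k)⁻¹ = (a * b) ^ (2 * k + 1) * b := by
      intro H _ a b ha hb k
      have e1 : a = (a * b) * b := by rw [mul_assoc, hb, mul_one]
      calc (a * b) ^ k * a * ((a * b) ^ k)⁻¹
          = (a * b) ^ k * ((a * b) * b) * ((a * b) ^ k)⁻¹ := by rw [← e1]
        _ = (a * b) * ((a * b) ^ k * b * ((a * b) ^ k)⁻¹) := by
            rw [← mul_assoc ((a * b) ^ k), ← pow_succ, pow_succ']
            simp only [mul_assoc]
        _ = _ := by rw [dih a b ha hb, ← mul_assoc, ← pow_succ']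
    rcases Nat.even_or_odd' (M i j) with ⟨k, hk | hk⟩
    · have h1 := ad_conj_gen cs φ hφ ((a * b) ^ k) (simR cs j)
      have h2 : cjR cs (φ ((a * b) ^ k)) (simR cs j) = simR cs j := by
        apply Subtype.ext
        rw [cjR_val, map_pow, map_mul, hsφ, htφ]
        show (s * t) ^ k * t * ((s * t) ^ k)⁻¹ = t
        rw [dih s t hss htt, ← hk, hst, one_mul]
      rw [h2] at h1
      have h3 := congrArg p h1
      rw [map_mul, map_mul, map_inv, map_pow, map_mul, dih _ _ haa hbb, ← hk] at h3
      exact mul_eq_right.1 h3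
    · have h1 := ad_conj_gen cs φ hφ ((a * b) ^ k) (simR cs i)
      have h2 : cjR cs (φ ((a * b) ^ k)) (simR cs i) = simR cs j := by
        apply Subtype.ext
        rw [cjR_val, map_pow, map_mul, hsφ, htφ]
        show (s * t) ^ k * s * ((s * t) ^ k)⁻¹ = t
        rw [dih' s t hss htt, ← hk, hst, one_mul]
      rw [h2] at h1
      have h3 := congrArg p h1
      rw [map_mul, map_mul, map_inv, map_pow, map_mul, dih' _ _ haa hbb, ← hk] at h3
      exact mul_eq_right.1 h3
  let ψ : W →* _ := cs.lift ⟨_, hlift⟩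
  have hψ : ∀ i, ψ (cs.simple i) = p (coxE cs (simR cs i)) := fun i =>
    cs.lift_apply_simple hlift i
  have hconj : ∀ w y, ψ w * p (coxE cs y) * (ψ w)⁻¹ = p (coxE cs (cjR cs w y)) := by
    intro w
    induction w using cs.simple_induction with
    | simple i =>
      intro y
      rw [hψ, ← map_mul, ← map_inv, ← map_mul, coxE_conj]
      rfl
    | one => intro y; simp [cjR_one]
    | mul v w hv hw =>
      intro y
      rw [map_mul, cjR_mul, ← hv, ← hw]
      group
  have hfac : ψ.comp φ = p := by
    ext g
    induction g using coxE_induction cs with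
    | h1 => simp
    | he x =>
      obtain ⟨w, i, hx⟩ := x.2
      have hx' : x = cjR cs w (simR cs i) := Subtype.ext hx
      rw [MonoidHom.comp_apply, hφ, hx, map_mul, map_mul, map_inv, hψ, hconj, ← hx']
    | hm a b ha hb => rw [map_mul, map_mul, ha, hb]
    | hi a ha => rw [map_inv, map_inv, ha]
  intro k hk
  rw [MonoidHom.mem_ker] at hk
  rw [← QuotientGroup.eq_one_iff]
  change p k = 1
  rw [← hfac, MonoidHom.comp_apply, hk, map_one]

end AdGroup

section AdKer

variable (cs : CoxeterSystem M W) (φ : EnvelGroup (CoxeterQuandle cs) →* W)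

/-- conjugacy classes of reflections -/
abbrev RCl (cs : CoxeterSystem M W) : Type :=
  {c : ConjClasses W // ∃ t : W, cs.IsReflection t ∧ ConjClasses.mk t = c}

/-- class of a reflection -/
def rcl (x : CoxeterQuandle cs) : RCl cs := ⟨ConjClasses.mk x.1, x.1, x.2, rfl⟩

theorem rcl_cj (w : W) (x : CoxeterQuandle cs) : rcl cs (cjR cs w x) = rcl cs x := by
  apply Subtype.ext
  show ConjClasses.mk (w * x.1 * w⁻¹) = ConjClasses.mk x.1
  rw [ConjClasses.mk_eq_mk_iff_isConj]
  exact (isConj_iff.2 ⟨w, rfl⟩).symm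

theorem rcl_eq {x y : CoxeterQuandle cs} (h : rcl cs x = rcl cs y) : ∃ w, y = cjR cs w x := by
  have := ConjClasses.mk_eq_mk_iff_isConj.1 (congrArg Subtype.val h)
  obtain ⟨w, hw⟩ := isConj_iff.1 this
  exact ⟨w, Subtype.ext hw.symm⟩

instance RCl_finite : Finite (RCl cs) := by
  refine Finite.of_surjective (fun i : B => rcl cs (simR cs i)) ?_
  rintro ⟨_, t, ⟨w, i, rfl⟩, rfl⟩
  exact ⟨i, (rcl_cj cs w (simR cs i)).symm⟩

/-- the abelianization-type map -/
noncomputable def degHom : EnvelGroup (CoxeterQuandle cs) →* Multiplicative (RCl cs → ℤ) := by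
  classical
  exact Rack.toEnvelGroup.map
    { toFun := fun x => (Multiplicative.ofAdd (Pi.single (rcl cs x) 1) :
        Multiplicative (RCl cs → ℤ))
      map_act' := by
        intro x y
        have h : rcl cs (x ◃ y) = rcl cs y := rcl_cj cs x.1 y
        rw [h, Quandle.conj_act_eq_conj]
        exact (mul_inv_cancel_comm (G := Multiplicative (RCl cs → ℤ)) _ _).symm }

open Classical in
theorem degHom_coxE (x : CoxeterQuandle cs) :
    degHom cs (coxE cs x) = Multiplicative.ofAdd (Pi.single (rcl cs x) 1) := rfl

theorem ad_ker_free
    (hφ : ∀ x : CoxeterQuandle cs, φ (coxE cs x) = x.1)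
    : Nonempty (φ.ker ≃* Multiplicative (Fin (Nat.card (RCl cs)) → ℤ)) := by
  classical
  letI : CommGroup φ.ker :=
    { (inferInstance : Group φ.ker) with
      mul_comm := fun a b => Subtype.ext (ad_ker_central cs φ hφ a.1 a.2 b.1) }
  let r := (Finite.equivFin (RCl cs)).symm
  have hrep : ∀ c : RCl cs, ∃ x : CoxeterQuandle cs, rcl cs x = c := by
    rintro ⟨_, t, ht, rfl⟩
    exact ⟨⟨t, ht⟩, rfl⟩
  choose rep hrep using hrep
  let sq : CoxeterQuandle cs → φ.ker := fun x => ⟨coxE cs x * coxE cs x, ad_sq_mem cs φ hφ x⟩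
  have hsq : ∀ x, sq x = sq (rep (rcl cs x)) := by
    intro x
    obtain ⟨w, hw⟩ := rcl_eq cs (hrep (rcl cs x)).symm
    apply Subtype.ext
    show _ = coxE cs (rep (rcl cs x)) * coxE cs (rep (rcl cs x))
    rw [hw, ad_sq_conj cs φ hφ]
  let θ : Multiplicative (Fin (Nat.card (RCl cs)) → ℤ) →* φ.ker :=
    { toFun := fun v => ∏ i, sq (rep (r i)) ^ (v.toAdd i)
      map_one' := by simp
      map_mul' := fun v w => by
        simp only [toAdd_mul, Pi.add_apply, zpow_add, Finset.prod_mul_distrib] }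
  have hθ : ∀ v, θ v = ∏ i, sq (rep (r i)) ^ (v.toAdd i) := fun v => rfl
  have hdeg : ∀ v c, (degHom cs (θ v).1).toAdd c = 2 * v.toAdd (r.symm c) := by
    intro v c
    have h1 : degHom cs (θ v).1 = ((degHom cs).comp φ.ker.subtype) (θ v) := rfl
    rw [h1, hθ, map_prod, toAdd_prod, Finset.sum_apply, Finset.sum_eq_single (r.symm c)]
    · have : ((degHom cs).comp φ.ker.subtype) (sq (rep (r (r.symm c)))) =
        Multiplicative.ofAdd (Pi.single c 1) * Multiplicative.ofAdd (Pi.single c 1) := by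
        show degHom cs (coxE cs (rep (r (r.symm c))) * coxE cs (rep (r (r.symm c)))) = _
        rw [map_mul, degHom_coxE, hrep, Equiv.apply_symm_apply]
      rw [map_zpow, this]
      simp
      ring
    · intro i _ hi
      have : ((degHom cs).comp φ.ker.subtype) (sq (rep (r i))) =
        Multiplicative.ofAdd (Pi.single (r i) 1) * Multiplicative.ofAdd (Pi.single (r i) 1) := by
        show degHom cs (coxE cs (rep (r i)) * coxE cs (rep (r i))) = _
        rw [map_mul, degHom_coxE, hrep]
      have hne : c ≠ r i := fun h => hi (by rw [h, Equiv.symm_apply_apply])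
      rw [map_zpow, this]
      simp [Pi.single_eq_of_ne hne]
    · simp
  have hinj : Function.Injective θ := by
    intro v w h
    apply Multiplicative.toAdd.injective
    funext i
    have h1 := hdeg v (r i)
    rw [h, hdeg w (r i)] at h1
    simp only [Equiv.symm_apply_apply] at h1
    omega
  have hsurj : Function.Surjective θ := by
    let N := θ.range.map φ.ker.subtype
    have hNk : N ≤ φ.ker := by
      rintro _ ⟨x, _, rfl⟩
      exact x.2
    haveI : N.Normal := ⟨fun n hn g => by
      have := ad_ker_central cs φ hφ n (hNk hn) g
      rw [← this, mul_inv_cancel_right]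
      exact hn⟩
    have hN : ∀ x, coxE cs x * coxE cs x ∈ N := by
      intro x
      refine ⟨sq x, ⟨Multiplicative.ofAdd (Pi.single (r.symm (rcl cs x)) 1), ?_⟩, rfl⟩
      rw [hθ, Finset.prod_eq_single (r.symm (rcl cs x)), hsq x]
      · simp
      · intro i _ hi
        simp [Pi.single_eq_of_ne hi]
      · simp
    intro k
    obtain ⟨x, ⟨v, hv⟩, hx⟩ := ad_ker_le cs φ hφ N hN k.2
    exact ⟨v, hv.trans (Subtype.ext hx)⟩
  exact ⟨(MulEquiv.ofBijective θ ⟨hinj, hsurj⟩).symm⟩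

end AdKer

/-- For every `n ≥ 0`, the restriction map `Hⁿ(Ad(Q_W), ℚ) → Hⁿ(C_W, ℚ)` in group
cohomology (trivial coefficients) induced by the inclusion `C_W ↪ Ad(Q_W)` is an
isomorphism; consequently `H*(Ad(Q_W), ℚ)` is isomorphic to an exterior `ℚ`-algebra on
`c(W)` generators of degree `1`, i.e. `Hⁿ(Ad(Q_W), ℚ)` has dimension `c(W).choose n`. -/
theorem stmt_11 (cs : CoxeterSystem M W)
    (φ : EnvelGroup (CoxeterQuandle cs) →* W)
    (hφ : ∀ x : CoxeterQuandle cs, φ (coxE cs x) = x.1) :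
    (∀ n : ℕ, CategoryTheory.IsIso (HomologicalComplex.homologyMap (cochainsRes φ.ker.subtype) n)) ∧
    (∀ n : ℕ,
      Module.finrank ℚ
        (groupCohomology (Rep.trivial ℚ (EnvelGroup (CoxeterQuandle cs)) ℚ) n) =
      (Nat.card {c : ConjClasses W // ∃ t : W, cs.IsReflection t ∧ ConjClasses.mk t = c}).choose
        n) := by
  have h1 : ∀ n : ℕ,
      CategoryTheory.IsIso (HomologicalComplex.homologyMap (cochainsRes φ.ker.subtype) n) :=
    fun n => cox_isIso cs φ (ad_surj cs φ hφ) (ad_ker_central cs φ hφ) n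
  refine ⟨h1, fun n => ?_⟩
  obtain ⟨e⟩ := ad_ker_free cs φ hφ
  rw [finrank_coh_of_isIso _ n (h1 n), finrank_coh_free _ e]
end
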